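/- Let A be a σ-unital algebraically simple C*-algebra with strict comparison which is not purely infinite. Suppose e, a ∈ Ped(A⊗K)_+ are contractions such that ω(a) = 0 and d_τ(a) < d_τ(e) for all τ ∈ \overline{QT(A)}^w. Then for any ε > 0 there exists a positive contraction b ∈ Her(e) such that: (1) d_τ(a) − ε < τ(b) ≤ d_τ(a) for all τ ∈ \overline{QT(A)}^w; (2) ω(b) < ε/2; and (3) there exists a positive element e_C ∈ Her(b)^⊥ ∩ Her(e) such that for all τ ∈ \overline{QT(A)}^w: d_τ(e) − d_τ(a) ≤ d_τ(e_C) ≤ sup{τ(c) : c ∈ (Her(b)^⊥ ∩ Her(e))_+, ‖c‖ ≤ 1} < d_τ(e) − d_τ(a) + ε (the supremum equals τ(q), where q is the open projection associated with Her(b)^⊥ ∩ Her(e)). -/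

import Mathlib

open scoped ENNReal
open Filter Topology

noncomputable section

namespace Paper

/-! ### Generic definitions in a (non-unital) C*-algebra -/

variable (R : Type*) [NonUnitalCStarAlgebra R] [PartialOrder R] [StarOrderedRing R]

variable {R} in
/-- The hereditary C*-subalgebra generated by `b`, i.e. `closure (b R b)`. -/
def her (b : R) : Set R := closure {x : R | ∃ y : R, x = b * y * b}

/-- `I` is a (not necessarily closed) two-sided ideal of the subalgebra `B`. -/
def IsIdealIn (B I : Set R) : Prop :=
  I ⊆ B ∧ (0 : R) ∈ I ∧ (∀ x ∈ I, ∀ y ∈ I, x + y ∈ I) ∧ (∀ x ∈ I, -x ∈ I) ∧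
    (∀ x ∈ I, ∀ b ∈ B, x * b ∈ I ∧ b * x ∈ I)

variable {R} in
/-- The Pedersen ideal of the subalgebra `B`: the minimal dense two-sided ideal of `B`,
equivalently the intersection of all dense two-sided ideals of `B`. -/
def pedersenIn (B : Set R) : Set R :=
  ⋂ I ∈ {I : Set R | IsIdealIn R B I ∧ B ⊆ closure I}, I

/-- The Pedersen ideal of `R`. -/
def pedersen : Set R := pedersenIn (Set.univ : Set R)

variable {R} in
/-- Cuntz subequivalence `a ≲ b`. -/
def CuntzLE (a b : R) : Prop :=
  ∃ x : ℕ → R, Tendsto (fun n => ‖a - star (x n) * b * x n‖) atTop (𝓝 0)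

variable {R} in
/-- Cuntz subequivalence relative to a subset `B` (the `xₙ` are taken in `B`). -/
def CuntzLEIn (B : Set R) (a b : R) : Prop :=
  ∃ x : ℕ → R, (∀ n, x n ∈ B) ∧ Tendsto (fun n => ‖a - star (x n) * b * x n‖) atTop (𝓝 0)

variable {R} in
/-- Cuntz equivalence `a ∼ b`. -/
def CuntzEq (a b : R) : Prop := CuntzLE a b ∧ CuntzLE b a

/-- The cut-off function `f_ε`: `0` on `[0, ε/2]`, `1` on `[ε, ∞)`, linear in between. -/
def cutoff (ε : ℝ) : ℝ → ℝ := fun t => min 1 (max 0 (2 * t / ε - 1))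

variable {R} in
/-- `f_ε(a)`, via the (non-unital) continuous functional calculus. -/
def fEps (ε : ℝ) (a : R) : R := cfcₙ (cutoff ε) a

/-- A densely defined 2-quasitrace on `R` (recorded by its values on positive elements;
the value on non-positive elements is normalised to `0`). -/
structure QuasiTrace : Type _ where
  toFun : R → ℝ≥0∞
  zero_of_not_nonneg : ∀ a : R, ¬ (0 ≤ a) → toFun a = 0
  map_zero : toFun 0 = 0
  map_smul : ∀ (r : ℝ) (a : R), 0 < r → 0 ≤ a → toFun (r • a) = ENNReal.ofReal r * toFun a
  map_add_of_commute : ∀ a b : R, 0 ≤ a → 0 ≤ b → a * b = b * a →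
    toFun (a + b) = toFun a + toFun b
  map_star_mul_self : ∀ x : R, toFun (star x * x) = toFun (x * star x)
  lowerSemicontinuousOn : LowerSemicontinuousOn toFun {a : R | 0 ≤ a}
  finite_on_pedersen : ∀ a ∈ pedersen R, 0 ≤ a → toFun a < ∞
  exists_matrix_extension : ∃ σ : Matrix (Fin 2) (Fin 2) R → ℝ≥0∞,
    (∀ a : R, σ (fun i j => if i = 0 ∧ j = 0 then a else 0) = toFun a) ∧
    σ 0 = 0 ∧
    (∀ (r : ℝ) (x : Matrix (Fin 2) (Fin 2) R), 0 < r → (∃ y, x = star y * y) →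
      σ (r • x) = ENNReal.ofReal r * σ x) ∧
    (∀ x y : Matrix (Fin 2) (Fin 2) R, (∃ z, x = star z * z) → (∃ z, y = star z * z) →
      x * y = y * x → σ (x + y) = σ x + σ y) ∧
    (∀ x : Matrix (Fin 2) (Fin 2) R, σ (star x * x) = σ (x * star x))

/-- The topology of pointwise convergence on the Pedersen ideal. -/
instance : TopologicalSpace (QuasiTrace R) :=
  TopologicalSpace.induced (fun τ => fun a : pedersen R => τ.toFun a) inferInstance

variable {R}

/-- The zero quasitrace. -/
def QuasiTrace.IsZero (τ : QuasiTrace R) : Prop := ∀ a : R, τ.toFun a = 0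

/-- The dimension function `d_τ(a) = lim_{ε → 0} τ(f_ε(a))`. -/
def dTau (τ : QuasiTrace R) (a : R) : ℝ≥0∞ :=
  ⨆ n : ℕ, τ.toFun (fEps (1 / (n + 1)) a)

/-- `ω(a)` relative to a set `S` of quasitraces:
`lim_n sup {d_τ(a) - τ(f_{1/n}(a)) : τ ∈ S}`. -/
def omegaOn (S : Set (QuasiTrace R)) (a : R) : ℝ≥0∞ :=
  ⨅ n : ℕ, ⨆ τ ∈ S, (dTau τ a - τ.toFun (fEps (1 / (n + 1)) a))

/-- The seminorm `‖x‖_{2,S}`. -/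
def norm2On (S : Set (QuasiTrace R)) (x : R) : ℝ≥0∞ :=
  ⨆ τ ∈ S, (τ.toFun (star x * x)) ^ (1 / 2 : ℝ)

variable (R)

/-- `R` has (Blackadar's) strict comparison. -/
def StrictComparison : Prop :=
  ∀ a b : R, 0 ≤ a → 0 ≤ b →
    (∀ τ : QuasiTrace R, ¬ τ.IsZero → dTau τ a < dTau τ b) → CuntzLE a b

/-- `R` is a simple C*-algebra: it is nonzero and has no nontrivial closed two-sided ideals. -/
def IsSimpleCStar : Prop :=
  (∃ x : R, x ≠ 0) ∧
    ∀ I : TwoSidedIdeal R, IsClosed (I : Set R) → (I : Set R) = {0} ∨ (I : Set R) = Set.univ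

/-- `R` is σ-unital: it contains a strictly positive element `h`
(equivalently, `Her(h) = R`). -/
def SigmaUnital : Prop := ∃ h : R, 0 ≤ h ∧ her h = Set.univ

/-- `R` is elementary: isomorphic to the algebra of compact operators on some Hilbert space. -/
def IsElementary : Prop :=
  ∃ (H : Type) (_ : NormedAddCommGroup H) (_ : InnerProductSpace ℂ H) (_ : CompleteSpace H)
    (φ : R →⋆ₙₐ[ℂ] (H →L[ℂ] H)), Function.Injective φ ∧
      Set.range φ = {T : H →L[ℂ] H | IsCompactOperator (⇑T)}

/-- `R` is purely infinite: `R ≇ ℂ` and `b ≲ a` for all nonzero positive `a, b`. -/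
def PurelyInfinite : Prop :=
  (¬ ∃ φ : R →⋆ₙₐ[ℂ] ℂ, Function.Bijective φ) ∧
    ∀ a b : R, 0 ≤ a → 0 ≤ b → a ≠ 0 → b ≠ 0 → CuntzLE b a

/-- `R` is finite: its minimal unitization contains no non-unitary isometry. -/
def IsFiniteCStar : Prop :=
  ∀ v : Unitization ℂ R, star v * v = 1 → v * star v = 1

/-- `R` has stable rank one: the invertible elements are dense in the minimal unitization. -/
def StableRankOne : Prop := Dense {x : Unitization ℂ R | IsUnit x}

variable {R}

/-- `c` represents `n·[a]` in the Cuntz semigroup: it is the sum of `n` mutually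
orthogonal positive elements, each Cuntz equivalent to `a`. -/
def IsNFoldRep (n : ℕ) (a c : R) : Prop :=
  ∃ f : Fin n → R, (∀ i, 0 ≤ f i) ∧ (∀ i, CuntzEq (f i) a) ∧
    (∀ i j, i ≠ j → f i * f j = 0) ∧ c = ∑ i, f i

/-- `s` represents the supremum of the increasing sequence of Cuntz classes `[y n]`. -/
def IsCuntzLUB (y : ℕ → R) (s : R) : Prop :=
  (∀ n, CuntzLE (y n) s) ∧ ∀ c : R, 0 ≤ c → (∀ n, CuntzLE (y n) c) → CuntzLE s c

/-- `[x] ≪ [y]` in the Cuntz semigroup. -/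
def CuntzWayBelow (x y : R) : Prop :=
  ∀ yseq : ℕ → R, (∀ n, 0 ≤ yseq n) → (∀ n, CuntzLE (yseq n) (yseq (n + 1))) →
    ∀ s : R, 0 ≤ s → IsCuntzLUB yseq s → CuntzLE y s → ∃ n₀, CuntzLE x (yseq n₀)

variable (R)

/-- The Cuntz semigroup of `R` is almost unperforated. -/
def AlmostUnperforated : Prop :=
  ∀ (a b : R) (k : ℕ), 1 ≤ k → 0 ≤ a → 0 ≤ b →
    (∃ c d : R, IsNFoldRep (k + 1) a c ∧ IsNFoldRep k b d ∧ CuntzLE c d) → CuntzLE a b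

/-- The Cuntz semigroup of `R` is almost divisible. -/
def AlmostDivisible : Prop :=
  ∀ x y : R, 0 ≤ x → 0 ≤ y → CuntzWayBelow x y → ∀ n : ℕ, 1 ≤ n →
    ∃ z : R, 0 ≤ z ∧ (∃ c : R, IsNFoldRep n z c ∧ CuntzLE c y) ∧
      (∃ c : R, IsNFoldRep (n + 1) z c ∧ CuntzLE x c)

/-! ### The stabilization `W ≅ A ⊗ K` -/

variable (A W : Type*) [NonUnitalCStarAlgebra A] [PartialOrder A] [StarOrderedRing A]
  [NonUnitalCStarAlgebra W] [PartialOrder W] [StarOrderedRing W]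

/-- A realization of `W` as the stabilization `A ⊗ K`: the maps `emb i j : a ↦ a ⊗ e_{ij}`
are isometric, satisfy the matrix-unit relations, and have dense joint linear span. -/
structure Stabilization : Type _ where
  emb : ℕ → ℕ → (A →ₗ[ℂ] W)
  emb_mul : ∀ (i j k l : ℕ) (a b : A),
    emb i j a * emb k l b = if j = k then emb i l (a * b) else 0
  emb_star : ∀ (i j : ℕ) (a : A), star (emb i j a) = emb j i (star a)
  norm_emb : ∀ (i j : ℕ) (a : A), ‖emb i j a‖ = ‖a‖
  dense_span : Dense (Submodule.span ℂ {w : W | ∃ (i j : ℕ) (a : A), w = emb i j a} : Set W)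

variable {A W}

/-- The set `QT(A)` of quasitraces normalized on `A ⊆ A ⊗ K`. -/
def QTSet (SB : Stabilization A W) : Set (QuasiTrace W) :=
  {τ | (⨆ a : {a : A // 0 ≤ a ∧ ‖a‖ ≤ 1}, τ.toFun (SB.emb 0 0 a)) = 1}

/-- The quasitraces normalized on the hereditary subalgebra `Her(c) ⊆ W`. -/
def QTSetHer (c : W) : Set (QuasiTrace W) :=
  {τ : QuasiTrace W |
    (⨆ a : {a : W // a ∈ her c ∧ 0 ≤ a ∧ ‖a‖ ≤ 1}, τ.toFun a) = 1}

/-- `ω(a) = 0` for `a ∈ W = A ⊗ K`, computed relative to `\overline{QT(Her(e))}^w`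
for any nonzero `e ∈ Ped(A)₊`. -/
def OmegaZero (SB : Stabilization A W) (a : W) : Prop :=
  ∀ e : A, 0 ≤ e → e ≠ 0 → e ∈ pedersen A →
    omegaOn (closure (QTSetHer (SB.emb 0 0 e))) a = 0

/-- `A` has tracial approximate oscillation zero. -/
def TAOZ (SB : Stabilization A W) : Prop :=
  ∀ e : A, 0 ≤ e → e ≠ 0 → e ∈ pedersen A →
    ∀ a : W, 0 ≤ a → a ∈ pedersen W →
      ∃ b : ℕ → W, (∀ n, 0 ≤ b n) ∧ (∀ n, ‖b n‖ ≤ 1) ∧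
        (∀ n, b n ∈ pedersenIn (her a)) ∧
        Tendsto (fun n => omegaOn (closure (QTSetHer (SB.emb 0 0 e))) (b n)) atTop (𝓝 0) ∧
        Tendsto (fun n => norm2On (closure (QTSetHer (SB.emb 0 0 e))) (a - b n)) atTop (𝓝 0)

/-! ### Affine functions on the quasitrace cone and the map `Γ` -/

variable (W) in
/-- `ρ = t·τ + (1-t)·σ` as quasitraces. -/
def IsCombo (t : ℝ) (τ σ ρ : QuasiTrace W) : Prop :=
  ∀ a : W, 0 ≤ a →
    ρ.toFun a = ENNReal.ofReal t * τ.toFun a + ENNReal.ofReal (1 - t) * σ.toFun a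

variable (W) in
/-- `f` is affine on the quasitrace cone. -/
def IsAffineQT (f : QuasiTrace W → ℝ≥0∞) : Prop :=
  ∀ t : ℝ, 0 ≤ t → t ≤ 1 → ∀ τ σ ρ : QuasiTrace W, IsCombo W t τ σ ρ →
    f ρ = ENNReal.ofReal t * f τ + ENNReal.ofReal (1 - t) * f σ

variable (W) in
/-- Membership in `Aff₊(QT̃(A))`. -/
def MemAffPlus (f : QuasiTrace W → ℝ≥0∞) : Prop :=
  (∀ τ, f τ = 0) ∨
    (Continuous f ∧ IsAffineQT W f ∧ (∀ τ, f τ < ∞) ∧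
      (∀ τ : QuasiTrace W, ¬ τ.IsZero → 0 < f τ) ∧
      (∀ τ : QuasiTrace W, τ.IsZero → f τ = 0))

variable (W) in
/-- Membership in `LAff₊(QT̃(A))`. -/
def MemLAffPlus (f : QuasiTrace W → ℝ≥0∞) : Prop :=
  ∃ g : ℕ → QuasiTrace W → ℝ≥0∞, (∀ n, MemAffPlus W (g n)) ∧
    (∀ n τ, g n τ ≤ g (n + 1) τ) ∧ ∀ τ, f τ = ⨆ n, g n τ

variable (W) in
/-- The canonical map `Γ : Cu(A) → LAff₊(QT̃(A))`, `Γ([a])(τ) = d_τ(a)`, is surjective. -/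
def GammaSurjective : Prop :=
  ∀ f : QuasiTrace W → ℝ≥0∞, MemLAffPlus W f →
    ∃ a : W, 0 ≤ a ∧ ∀ τ : QuasiTrace W, dTau τ a = f τ


/-- The orthogonal complement `C^⊥ = {x : x·c = c·x = 0 for all c ∈ C}` of a subset `C ⊆ W`. -/
def perp (C : Set W) : Set W := {x : W | ∀ c ∈ C, x * c = 0 ∧ c * x = 0}

/-- `τ(q)` for the open projection `q` associated with the hereditary subalgebra `B`:
the supremum of `τ` over the positive contractions of `B`. -/
def tauOpenProj (τ : QuasiTrace W) (B : Set W) : ℝ≥0∞ :=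
  ⨆ c : {c : W // c ∈ B ∧ 0 ≤ c ∧ ‖c‖ ≤ 1}, τ.toFun c

/-!
By subadditivity of `d_τ`, the elements `x` with `d_τ(x⋆x) < ∞` form a dense ideal, so `d_τ` is
finite on `Ped(A ⊗ K)`. As `Ped(A) = A`, every nonzero `τ` restricts to a nonzero functional on `A`
of finite norm, hence is a multiple of some element of `QT(A)`, and strict comparison turns
`d_τ(a) < d_τ(e)` into `a ≲ e`. Rørdam's lemma then gives `x` with `x⋆x = f_{δ/2}(a)` and
`d = xx⋆ ∈ Her(e)`. Thus `d_τ(d) ≤ d_τ(a)`, while `τ(f_η(d)) ≥ τ(f_δ(a))` for `η ≤ 1`, and the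
latter is uniformly close to `d_τ(a)` because `ω(a) = 0`.

Take `b = f_{1/2}(d)` and `g = f_{1/4}(d)`, so that `gb = b`. Then `e_C = (1 - g) e (1 - g)` is
orthogonal to `b`; subadditivity gives `d_τ(e) ≤ d_τ(e_C) + d_τ(g)`, and any positive contraction
of `Her(e)` orthogonal to `b` has `τ(c) + τ(b) = τ(c + b) ≤ d_τ(e)`.
-/

variable {R}

/-! ### The cutoff functions and functional calculus -/

section Cutoff

variable {ε δ t : ℝ}

@[simp] lemma cutoff_zero (ε : ℝ) : cutoff ε 0 = 0 := by simp [cutoff]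

@[fun_prop] lemma continuous_cutoff (ε : ℝ) : Continuous (cutoff ε) := by
  unfold cutoff; fun_prop

lemma cutoff_nonneg (ε t : ℝ) : 0 ≤ cutoff ε t := by simp [cutoff]

lemma cutoff_le_one (ε t : ℝ) : cutoff ε t ≤ 1 := by simp [cutoff]

lemma cutoff_eq_one (hε : 0 < ε) (h : ε ≤ t) : cutoff ε t = 1 := by
  have : 1 ≤ 2 * t / ε - 1 := by
    rw [le_sub_iff_add_le, le_div_iff₀ hε]; linarith
  simp [cutoff, this]

lemma lt_of_cutoff_ne_zero (hε : 0 < ε) (h : cutoff ε t ≠ 0) : ε / 2 < t := by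
  contrapose! h
  have : 2 * t / ε - 1 ≤ 0 := by
    rw [sub_nonpos, div_le_one hε]; linarith
  simp [cutoff, max_eq_left this]

lemma cutoff_mul_cutoff (hδ : 0 < δ) (hδε : δ ≤ ε / 2) (t : ℝ) :
    cutoff ε t * cutoff δ t = cutoff ε t := by
  by_cases h : cutoff ε t = 0
  · simp [h]
  · rw [cutoff_eq_one hδ (hδε.trans (lt_of_cutoff_ne_zero (by linarith) h).le), mul_one]

lemma norm_cutoff_mul_sub_le (hε : 0 < ε) (ht : 0 ≤ t) : ‖cutoff ε t * t - t‖ ≤ ε := by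
  have h0 := cutoff_nonneg ε t
  have h1 := cutoff_le_one ε t
  rw [Real.norm_eq_abs, abs_le]
  rcases le_or_gt ε t with h | h
  · rw [cutoff_eq_one hε h]; constructor <;> linarith
  · constructor <;> nlinarith

/-- The function `t ↦ f_ε(t) / t`, extended by `0` to `[0, ε/2]`; it exhibits `f_ε(a)` as a
multiple of `a`. -/
def cutoffQuot (ε t : ℝ) : ℝ := cutoff ε t / max t (ε / 2)

@[simp] lemma cutoffQuot_zero (ε : ℝ) : cutoffQuot ε 0 = 0 := by simp [cutoffQuot]

lemma max_half_pos (hε : 0 < ε) (t : ℝ) : 0 < max t (ε / 2) := lt_max_of_lt_right (half_pos hε)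

lemma continuous_cutoffQuot (hε : 0 < ε) : Continuous (cutoffQuot ε) :=
  (continuous_cutoff ε).div (by fun_prop) fun t => (max_half_pos hε t).ne'

lemma cutoffQuot_nonneg (hε : 0 < ε) (t : ℝ) : 0 ≤ cutoffQuot ε t :=
  div_nonneg (cutoff_nonneg ε t) (max_half_pos hε t).le

lemma cutoffQuot_le (hε : 0 < ε) (t : ℝ) : cutoffQuot ε t ≤ 2 / ε := by
  calc cutoffQuot ε t ≤ 1 / (ε / 2) := by
        unfold cutoffQuot
        gcongr
        exacts [cutoff_le_one ε t, le_max_right _ _]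
    _ = 2 / ε := one_div_div ε 2

lemma cutoffQuot_mul_self (hε : 0 < ε) (t : ℝ) : cutoffQuot ε t * t = cutoff ε t := by
  by_cases h : cutoff ε t = 0
  · simp [cutoffQuot, h]
  · have ht := lt_of_cutoff_ne_zero hε h
    rw [cutoffQuot, max_eq_left ht.le, div_mul_cancel₀]
    linarith

end Cutoff

lemma mul_eq_of_mul_eq_of_isSelfAdjoint {M : Type*} [Mul M] [StarMul M] {g y : M}
    (hy : IsSelfAdjoint y) (hg : IsSelfAdjoint g) (h : y * g = y) : g * y = y := by
  simpa only [star_mul, hy.star_eq, hg.star_eq] using congrArg star h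

section FunctionalCalculus

variable {B : Type*} [NonUnitalCStarAlgebra B] {ε δ : ℝ}

open scoped ContinuousMapZero in
lemma mul_cfcₙ_eq_cfcₙ_mul {z p q : B} (hp : IsSelfAdjoint p) (hq : IsSelfAdjoint q)
    (h : z * p = q * z) {f : ℝ → ℝ} (hf : Continuous f) (hf0 : f 0 = 0) :
    z * cfcₙ f p = cfcₙ f q * z := by
  let s : Set ℝ := quasispectrum ℝ p ∪ quasispectrum ℝ q
  have hps : quasispectrum ℝ p ⊆ s := Set.subset_union_left
  have hqs : quasispectrum ℝ q ⊆ s := Set.subset_union_right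
  have : Fact ((0 : ℝ) ∈ s) := ⟨hps (quasispectrum.zero_mem ℝ p)⟩
  have : CompactSpace s := isCompact_iff_compactSpace.mp <|
    (NonUnitalContinuousFunctionalCalculus.isCompact_quasispectrum p).union
      (NonUnitalContinuousFunctionalCalculus.isCompact_quasispectrum q)
  have hcp := cfcₙHomSuperset_continuous hp hps
  have hcq := cfcₙHomSuperset_continuous hq hqs
  have key (g : ContinuousMapZero s ℝ) :
      z * cfcₙHomSuperset hp hps g = cfcₙHomSuperset hq hqs g * z := by
    induction g using ContinuousMapZero.induction_on_of_compact with
    | zero => simp only [map_zero, mul_zero, zero_mul]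
    | smul r g hg => simp only [map_smul, mul_smul_comm, smul_mul_assoc, hg]
    | id => simpa only [cfcₙHomSuperset_id] using h
    | star_id => simpa only [map_star, cfcₙHomSuperset_id, hp.star_eq, hq.star_eq] using h
    | add f g hf hg => simp only [map_add, mul_add, add_mul, hf, hg]
    | mul f g hf hg => rw [map_mul, map_mul, ← mul_assoc, hf, mul_assoc, hg, mul_assoc]
    | frequently g hg =>
      exact (isClosed_eq (hcp.const_mul z) (hcq.mul_const z)).mem_of_frequently_of_tendsto hg
        tendsto_id
  rw [cfcₙ_apply f p hf.continuousOn hf0 hp, cfcₙ_apply f q hf.continuousOn hf0 hq]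
  exact key ⟨⟨fun t => f t, by fun_prop⟩, hf0⟩

lemma star_fEps (ε : ℝ) (a : B) : star (fEps ε a) = fEps ε a :=
  (cfcₙ_predicate (cutoff ε) a : IsSelfAdjoint _).star_eq

lemma norm_fEps_le (ε : ℝ) (a : B) : ‖fEps ε a‖ ≤ 1 :=
  norm_cfcₙ_le fun t _ => by
    rw [Real.norm_of_nonneg (cutoff_nonneg ε t)]
    exact cutoff_le_one ε t

lemma fEps_mul_fEps (hδ : 0 < δ) (hδε : δ ≤ ε / 2) (a : B) :
    fEps ε a * fEps δ a = fEps ε a := by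
  simp only [fEps, ← cfcₙ_mul (cutoff ε) (cutoff δ) a, cutoff_mul_cutoff hδ hδε]

lemma fEps_mul_fEps' (hδ : 0 < δ) (hδε : δ ≤ ε / 2) (a : B) :
    fEps δ a * fEps ε a = fEps ε a := by
  simpa only [star_mul, star_fEps] using congrArg star (fEps_mul_fEps hδ hδε a)

lemma fEps_eq_cutoffQuot_mul (hε : 0 < ε) {a : B} (ha : IsSelfAdjoint a) :
    fEps ε a = cfcₙ (cutoffQuot ε) a * a := by
  have hc := continuous_cutoffQuot hε
  calc fEps ε a = cfcₙ (fun t => cutoffQuot ε t * t) a := by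
        simp only [cutoffQuot_mul_self hε]; rfl
    _ = cfcₙ (cutoffQuot ε) a * cfcₙ (fun t : ℝ => t) a := cfcₙ_mul _ _ a
    _ = cfcₙ (cutoffQuot ε) a * a := by rw [cfcₙ_id' ℝ a]

lemma fEps_eq_mul_cutoffQuot (hε : 0 < ε) {a : B} (ha : IsSelfAdjoint a) :
    fEps ε a = a * cfcₙ (cutoffQuot ε) a := by
  rw [fEps_eq_cutoffQuot_mul hε ha]
  exact (Commute.refl a).cfcₙ_real _

lemma continuousOn_fEps (ε : ℝ) : ContinuousOn (fEps ε) {a : B | IsSelfAdjoint a} :=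
  continuousOn_id.cfcₙ_of_mem_nhdsSet (s := Set.univ) (cutoff ε) Filter.univ_mem
    (fun _ ha => ha) (continuous_cutoff ε).continuousOn (cutoff_zero ε)

lemma fEps_mul_fEps_fEps {η : ℝ} (hε : 0 < ε) (hη : 0 < η)
    (hη1 : η ≤ 1) {a : B} (ha : IsSelfAdjoint a) :
    fEps ε a * fEps η (fEps (ε / 2) a) = fEps ε a := by
  have hcomp : fEps η (fEps (ε / 2) a) = cfcₙ (fun t => cutoff η (cutoff (ε / 2) t)) a :=
    (cfcₙ_comp' (cutoff η) (cutoff (ε / 2)) a).symm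
  rw [hcomp, fEps, ← cfcₙ_mul (cutoff ε) (fun t => cutoff η (cutoff (ε / 2) t)) a]
  congr 1 with t
  rcases eq_or_ne (cutoff ε t) 0 with h | h
  · rw [h, zero_mul]
  · rw [cutoff_eq_one (half_pos hε) (lt_of_cutoff_ne_zero hε h).le, cutoff_eq_one hη hη1, mul_one]

end FunctionalCalculus

section OrderedFunctionalCalculus

variable {f g h y : R} {ε : ℝ}

lemma fEps_nonneg (ε : ℝ) (a : R) : 0 ≤ fEps ε a := cfcₙ_nonneg fun t _ => cutoff_nonneg ε t

lemma cfcₙ_cutoffQuot_nonneg (hε : 0 < ε) (a : R) : 0 ≤ cfcₙ (cutoffQuot ε) a :=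
  cfcₙ_nonneg fun t _ => cutoffQuot_nonneg hε t

lemma norm_fEps_mul_self_sub_le (hε : 0 < ε) (hh : 0 ≤ h) :
    ‖fEps ε h * h - h‖ ≤ ε := by
  have hfun : cfcₙ (fun t => cutoff ε t * t - t) h = fEps ε h * h - h := by
    rw [cfcₙ_sub (fun t => cutoff ε t * t) (fun t => t) h,
      cfcₙ_mul (cutoff ε) (fun t => t) h, cfcₙ_id' ℝ h, fEps]
  rw [← hfun]
  exact norm_cfcₙ_le fun t ht =>
    norm_cutoff_mul_sub_le hε (quasispectrum_nonneg_of_nonneg h hh t ht)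

lemma star_sqrt (p : R) : star (CFC.sqrt p) = CFC.sqrt p :=
  (CFC.sqrt_nonneg p).isSelfAdjoint.star_eq

lemma sqrt_mul_mul_sqrt_le (hg : 0 ≤ g) (hy : IsSelfAdjoint y) (hy1 : ‖y‖ ≤ 1) :
    CFC.sqrt g * y * CFC.sqrt g ≤ g := by
  calc CFC.sqrt g * y * CFC.sqrt g ≤ ‖y‖ • (CFC.sqrt g * CFC.sqrt g) := by
        simpa only [star_sqrt] using
          CStarAlgebra.star_left_conjugate_le_norm_smul (a := CFC.sqrt g) hy
    _ = ‖y‖ • g := by rw [CFC.sqrt_mul_sqrt_self g hg]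
    _ ≤ (1 : ℝ) • g := smul_le_smul_of_nonneg_right hy1 hg
    _ = g := one_smul _ _

lemma sqrt_mul_mul_sqrt_of_commute (hg : 0 ≤ g) (h : Commute g y) :
    CFC.sqrt g * y * CFC.sqrt g = g * y := by
  have hs : Commute (CFC.sqrt g) y := h.cfcₙ_nnreal _
  rw [mul_assoc, ← hs.eq, ← mul_assoc, CFC.sqrt_mul_sqrt_self g hg]

lemma mul_self_le_self (hy : 0 ≤ y) (hy1 : ‖y‖ ≤ 1) : y * y ≤ y := by
  simpa only [sqrt_mul_mul_sqrt_of_commute hy (.refl y)] using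
    sqrt_mul_mul_sqrt_le hy hy.isSelfAdjoint hy1

lemma sqrt_mul_eq_sqrt (hf : 0 ≤ f) (hg : IsSelfAdjoint g) (hfg : f * g = f) :
    CFC.sqrt f * g = CFC.sqrt f := by
  have hgf : g * f = f := mul_eq_of_mul_eq_of_isSelfAdjoint hf.isSelfAdjoint hg hfg
  refine (sub_eq_zero.mp (CStarRing.star_mul_self_eq_zero_iff _ |>.mp ?_))
  calc star (CFC.sqrt f * g - CFC.sqrt f) * (CFC.sqrt f * g - CFC.sqrt f)
      = g * (CFC.sqrt f * CFC.sqrt f) * g - g * (CFC.sqrt f * CFC.sqrt f)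
        - (CFC.sqrt f * CFC.sqrt f * g - CFC.sqrt f * CFC.sqrt f) := by
        rw [star_sub, star_mul, star_sqrt, hg.star_eq]
        noncomm_ring
    _ = 0 := by simp only [CFC.sqrt_mul_sqrt_self f hf, hgf, hfg, sub_self]

end OrderedFunctionalCalculus

/-! ### Closed right ideals and hereditary subalgebras -/

section ClosedRightIdeal

variable {B : Type*} [NonUnitalCStarAlgebra B] {d h z : B}

/-- The closed right ideal `closure (h B)` generated by `h`. For `0 ≤ h` the hereditary subalgebra
of `h` is `closure (h B) ∩ (closure (h B))⋆`, which makes membership in `Her(h)` a pair of linear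
conditions. -/
def closedRightIdeal (h : B) : Submodule ℂ B :=
  (LinearMap.range (LinearMap.mulLeft ℂ h)).topologicalClosure

lemma isClosed_closedRightIdeal (h : B) : IsClosed (closedRightIdeal h : Set B) :=
  Submodule.isClosed_topologicalClosure _

lemma mul_mem_closedRightIdeal_self (h w : B) : h * w ∈ closedRightIdeal h :=
  Submodule.le_topologicalClosure _ ⟨w, rfl⟩

lemma mul_mem_closedRightIdeal (hz : z ∈ closedRightIdeal h) (w : B) :
    z * w ∈ closedRightIdeal h := by
  refine map_mem_closure (f := (· * w)) (continuous_mul_const w) hz ?_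
  rintro _ ⟨x, rfl⟩
  exact ⟨x * w, (mul_assoc h x w).symm⟩

lemma closedRightIdeal_le (hd : d ∈ closedRightIdeal h) :
    closedRightIdeal d ≤ closedRightIdeal h := by
  refine Submodule.topologicalClosure_minimal _ ?_ (isClosed_closedRightIdeal h)
  rintro _ ⟨w, rfl⟩
  exact mul_mem_closedRightIdeal hd w

lemma fEps_mem_closedRightIdeal {ε : ℝ} (hε : 0 < ε) (hd : IsSelfAdjoint d)
    (hdh : d ∈ closedRightIdeal h) : fEps ε d ∈ closedRightIdeal h := by
  rw [fEps_eq_mul_cutoffQuot hε hd]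
  exact mul_mem_closedRightIdeal hdh _

end ClosedRightIdeal

section Hereditary

variable {d h y z : R} {ε : ℝ}

lemma self_mem_closedRightIdeal (h : R) : h ∈ closedRightIdeal h :=
  mem_closure_of_tendsto ((CStarAlgebra.increasingApproximateUnit R).tendsto_mul_left h)
    (.of_forall fun u => ⟨u, rfl⟩)

lemma norm_fEps_mul_sub_sq_le (hε : 0 < ε) (hz : z * star z ≤ d) :
    ‖fEps ε d * z - z‖ ^ 2 ≤ 2 * ε := by
  have hd : 0 ≤ d := (mul_star_self_nonneg z).trans hz
  obtain ⟨v, hv⟩ := CStarAlgebra.nonneg_iff_eq_star_mul_self.mp (sub_nonneg.mpr hz)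
  have hd' : d = z * star z + star v * v := by rw [← hv]; abel
  set f := fEps ε d
  have hfd : ‖f * d - d‖ ≤ ε := norm_fEps_mul_self_sub_le hε hd
  have hfs : star f = f := star_fEps ε d
  have hle : (f * z - z) * star (f * z - z) ≤ (f * d - d) * f - (f * d - d) := by
    have hsum : (f * d - d) * f - (f * d - d) =
        (f * z - z) * star (f * z - z) + star (v * f - v) * (v * f - v) := by
      rw [hd']
      simp only [star_sub, star_mul, hfs]
      noncomm_ring
    rw [hsum]
    exact le_add_of_nonneg_right (star_mul_self_nonneg _)
  calc ‖f * z - z‖ ^ 2 = ‖(f * z - z) * star (f * z - z)‖ := by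
        rw [CStarRing.norm_self_mul_star, sq]
    _ ≤ ‖(f * d - d) * f - (f * d - d)‖ :=
        CStarAlgebra.norm_le_norm_of_nonneg_of_le (mul_star_self_nonneg _) hle
    _ ≤ ‖f * d - d‖ * ‖f‖ + ‖f * d - d‖ := by
        refine (norm_sub_le _ _).trans ?_
        gcongr
        exact norm_mul_le _ _
    _ ≤ ε * 1 + ε := by gcongr; exact norm_fEps_le ε d
    _ = 2 * ε := by ring

lemma mem_closedRightIdeal_of_mul_star_self_le (hz : z * star z ≤ d)
    (hd : d ∈ closedRightIdeal h) : z ∈ closedRightIdeal h := by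
  have hds : IsSelfAdjoint d := ((mul_star_self_nonneg z).trans hz).isSelfAdjoint
  have hsqrt : Tendsto (fun ε : ℝ => √(2 * ε)) (𝓝[>] 0) (𝓝 0) := by
    have : Continuous fun ε : ℝ => √(2 * ε) := by fun_prop
    simpa using this.tendsto' 0 0 (by simp) |>.mono_left nhdsWithin_le_nhds
  have hlim : Tendsto (fun ε => fEps ε d * z) (𝓝[>] 0) (𝓝 z) :=
    tendsto_iff_norm_sub_tendsto_zero.mpr <| squeeze_zero' (.of_forall fun _ => norm_nonneg _)
      (eventually_mem_nhdsWithin.mono fun ε hε =>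
        Real.le_sqrt_of_sq_le (norm_fEps_mul_sub_sq_le hε hz)) hsqrt
  exact (isClosed_closedRightIdeal h).mem_of_tendsto hlim <|
    eventually_mem_nhdsWithin.mono fun ε hε =>
      mul_mem_closedRightIdeal (fEps_mem_closedRightIdeal hε hds hd) z

lemma mem_closedRightIdeal_mul_star_self (z : R) : z ∈ closedRightIdeal (z * star z) :=
  mem_closedRightIdeal_of_mul_star_self_le le_rfl (self_mem_closedRightIdeal _)

lemma star_mem_closedRightIdeal_star_mul_self (z : R) :
    star z ∈ closedRightIdeal (star z * z) := by
  simpa only [star_star] using mem_closedRightIdeal_mul_star_self (star z)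

lemma sqrt_mem_closedRightIdeal (hh : 0 ≤ h) : CFC.sqrt h ∈ closedRightIdeal h := by
  simpa only [star_sqrt, CFC.sqrt_mul_sqrt_self h hh] using
    mem_closedRightIdeal_mul_star_self (CFC.sqrt h)

lemma tendsto_fEps_mul (hh : 0 ≤ h) (hz : z ∈ closedRightIdeal h) :
    Tendsto (fun ε => fEps ε h * z) (𝓝[>] 0) (𝓝 z) := by
  have hself : Tendsto (fun ε => fEps ε h * h) (𝓝[>] 0) (𝓝 h) :=
    tendsto_iff_norm_sub_tendsto_zero.mpr <| squeeze_zero' (.of_forall fun _ => norm_nonneg _)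
      (eventually_mem_nhdsWithin.mono fun ε hε => norm_fEps_mul_self_sub_le hε hh)
      (tendsto_id.mono_left nhdsWithin_le_nhds)
  rw [Metric.tendsto_nhds]
  intro η hη
  obtain ⟨_, ⟨w, rfl⟩, hw⟩ := Metric.mem_closure_iff.mp hz (η / 3) (by positivity)
  have hlim := hself.mul_const w
  filter_upwards [Metric.tendsto_nhds.mp hlim (η / 3) (by positivity)] with ε hε
  simp only [dist_eq_norm, LinearMap.mulLeft_apply] at hε hw ⊢
  calc ‖fEps ε h * z - z‖
      = ‖fEps ε h * (z - h * w) + (fEps ε h * h * w - h * w) - (z - h * w)‖ := by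
        congr 1; noncomm_ring
    _ ≤ 1 * ‖z - h * w‖ + ‖fEps ε h * h * w - h * w‖ + ‖z - h * w‖ := by
        refine (norm_sub_le _ _).trans (add_le_add_left ((norm_add_le _ _).trans ?_) _)
        gcongr
        exact (norm_mul_le _ _).trans (by gcongr; exact norm_fEps_le ε h)
    _ < η := by linarith

lemma tendsto_mul_fEps (hh : 0 ≤ h) (hz : star z ∈ closedRightIdeal h) :
    Tendsto (fun ε => z * fEps ε h) (𝓝[>] 0) (𝓝 z) := by
  simpa only [star_mul, star_star, star_fEps] using (tendsto_fEps_mul hh hz).star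

lemma tendsto_fEps_mul_mul_fEps (hh : 0 ≤ h) (hy : y ∈ closedRightIdeal h)
    (hy' : star y ∈ closedRightIdeal h) :
    Tendsto (fun ε => fEps ε h * y * fEps ε h) (𝓝[>] 0) (𝓝 y) := by
  have hbound (ε : ℝ) : ‖fEps ε h * y * fEps ε h - y‖ ≤
      ‖fEps ε h * y - y‖ + ‖y * fEps ε h - y‖ := by
    calc ‖fEps ε h * y * fEps ε h - y‖
        = ‖(fEps ε h * y - y) * fEps ε h + (y * fEps ε h - y)‖ := by congr 1; noncomm_ring
      _ ≤ ‖fEps ε h * y - y‖ * 1 + ‖y * fEps ε h - y‖ := by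
          refine (norm_add_le _ _).trans (add_le_add_left ((norm_mul_le _ _).trans ?_) _)
          gcongr
          exact norm_fEps_le ε h
      _ = _ := by rw [mul_one]
  have hlim := (tendsto_iff_norm_sub_tendsto_zero.mp (tendsto_fEps_mul hh hy)).add
    (tendsto_iff_norm_sub_tendsto_zero.mp (tendsto_mul_fEps hh hy'))
  rw [add_zero] at hlim
  exact tendsto_iff_norm_sub_tendsto_zero.mpr <|
    squeeze_zero (fun _ => norm_nonneg _) hbound hlim

lemma mem_her_iff (hh : 0 ≤ h) :
    y ∈ her h ↔ y ∈ closedRightIdeal h ∧ star y ∈ closedRightIdeal h := by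
  have hhs := hh.isSelfAdjoint
  refine ⟨fun hy => ⟨closure_mono ?_ hy, map_mem_closure continuous_star hy ?_⟩, fun hy => ?_⟩
  · rintro _ ⟨w, rfl⟩
    exact ⟨w * h, (mul_assoc h w h).symm⟩
  · rintro _ ⟨w, rfl⟩
    exact ⟨star w * h, by simp [hhs.star_eq, mul_assoc]⟩
  · refine mem_closure_of_tendsto (tendsto_fEps_mul_mul_fEps hh hy.1 hy.2) ?_
    filter_upwards [self_mem_nhdsWithin] with ε hε
    refine ⟨cfcₙ (cutoffQuot ε) h * y * cfcₙ (cutoffQuot ε) h, ?_⟩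
    nth_rw 1 [fEps_eq_mul_cutoffQuot hε hhs, fEps_eq_cutoffQuot_mul hε hhs]
    simp only [mul_assoc]

lemma mem_her_of_isSelfAdjoint (hh : 0 ≤ h) (hy : IsSelfAdjoint y) :
    y ∈ her h ↔ y ∈ closedRightIdeal h := by
  rw [mem_her_iff hh, hy.star_eq, and_self]

end Hereditary

/-! ### Quasitraces and dimension functions -/

section QuasiTraceBasic

variable (τ : QuasiTrace R) {a c g h y : R} {ε : ℝ} {K : ℝ≥0∞}

lemma QuasiTrace.toFun_le_of_commute (hy : 0 ≤ y) (h : y ≤ g) (hc : Commute y g) :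
    τ.toFun y ≤ τ.toFun g := by
  have := τ.map_add_of_commute y (g - y) hy (sub_nonneg.mpr h) (by rw [mul_sub, sub_mul, hc.eq])
  rw [add_sub_cancel] at this
  exact this ▸ le_self_add

lemma QuasiTrace.toFun_le_of_mul_eq (hy : 0 ≤ y) (hy1 : ‖y‖ ≤ 1) (hg : 0 ≤ g)
    (h : y * g = y) : τ.toFun y ≤ τ.toFun g := by
  have h' := mul_eq_of_mul_eq_of_isSelfAdjoint hy.isSelfAdjoint hg.isSelfAdjoint h
  have hc : Commute g y := h'.trans h.symm
  refine τ.toFun_le_of_commute hy ?_ hc.symm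
  simpa only [sqrt_mul_mul_sqrt_of_commute hg hc, h'] using
    sqrt_mul_mul_sqrt_le hg hy.isSelfAdjoint hy1

lemma QuasiTrace.toFun_le_of_tendsto {ι : Type*} {l : Filter ι} [l.NeBot] {u : ι → R}
    (hu : Tendsto u l (𝓝 c)) (hu0 : ∀ᶠ i in l, 0 ≤ u i) (hK : ∀ᶠ i in l, τ.toFun (u i) ≤ K) :
    τ.toFun c ≤ K := by
  by_contra! hlt
  have hev := τ.lowerSemicontinuousOn c (ge_of_tendsto hu hu0) K hlt
  obtain ⟨i, hi, hiK⟩ := (((tendsto_nhdsWithin_iff.mpr ⟨hu, hu0⟩).eventually hev).and hK).exists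
  exact hi.not_ge hiK

lemma toFun_fEps_le_dTau (hε : 0 < ε) (a : R) : τ.toFun (fEps ε a) ≤ dTau τ a := by
  obtain ⟨n, hn⟩ := exists_nat_one_div_lt (half_pos hε)
  refine (τ.toFun_le_of_mul_eq (fEps_nonneg ε a) (norm_fEps_le ε a) (fEps_nonneg _ a)
    (fEps_mul_fEps (by positivity) hn.le a)).trans ?_
  exact le_iSup (fun n : ℕ => τ.toFun (fEps (1 / (n + 1)) a)) n

lemma dTau_le_iff : dTau τ a ≤ K ↔ ∀ ε > 0, τ.toFun (fEps ε a) ≤ K :=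
  ⟨fun h _ hε => (toFun_fEps_le_dTau τ hε a).trans h,
    fun h => iSup_le fun _ => h _ (by positivity)⟩

lemma dTau_le_of_tendsto {ι : Type*} {l : Filter ι} [l.NeBot] {u : ι → R}
    (hu : Tendsto u l (𝓝 c)) (hu0 : ∀ᶠ i in l, 0 ≤ u i) (hK : ∀ᶠ i in l, dTau τ (u i) ≤ K) :
    dTau τ c ≤ K := by
  refine (dTau_le_iff τ).mpr fun ε hε => τ.toFun_le_of_tendsto (u := fun i => fEps ε (u i)) ?_
    (.of_forall fun i => fEps_nonneg ε _)
    (hK.mono fun i hi => (toFun_fEps_le_dTau τ hε _).trans hi)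
  have hc := (ge_of_tendsto hu hu0).isSelfAdjoint
  exact (continuousOn_fEps ε c hc).tendsto.comp <|
    tendsto_nhdsWithin_iff.mpr ⟨hu, hu0.mono fun i hi => hi.isSelfAdjoint⟩

lemma QuasiTrace.toFun_le_dTau (hh : 0 ≤ h) (hc : 0 ≤ c) (hc1 : ‖c‖ ≤ 1)
    (hch : c ∈ closedRightIdeal h) : τ.toFun c ≤ dTau τ h := by
  have hpos (ε : ℝ) : 0 ≤ fEps ε h * c * fEps ε h := by
    simpa only [star_fEps] using star_left_conjugate_nonneg hc (fEps ε h)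
  have hlim := tendsto_fEps_mul_mul_fEps hh hch (by rwa [hc.isSelfAdjoint.star_eq])
  refine τ.toFun_le_of_tendsto hlim (.of_forall hpos) ?_
  filter_upwards [self_mem_nhdsWithin] with ε hε
  have hε2 : 0 < ε / 2 := half_pos hε
  refine (τ.toFun_le_of_mul_eq (hpos ε) ?_ (fEps_nonneg (ε / 2) h) ?_).trans
    (toFun_fEps_le_dTau τ hε2 h)
  · calc ‖fEps ε h * c * fEps ε h‖ ≤ ‖fEps ε h‖ * ‖c‖ * ‖fEps ε h‖ := norm_mul₃_le
      _ ≤ 1 * 1 * 1 := by gcongr <;> exact norm_fEps_le ε h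
      _ = 1 := by norm_num
  · rw [mul_assoc, fEps_mul_fEps hε2 le_rfl]

lemma QuasiTrace.toFun_le_norm_mul_dTau (hc : 0 ≤ c) :
    τ.toFun c ≤ ENNReal.ofReal ‖c‖ * dTau τ c := by
  rcases eq_or_ne c 0 with rfl | hc0
  · simp [τ.map_zero]
  have hn : 0 < ‖c‖ := norm_pos_iff.mpr hc0
  have hunit : 0 ≤ ‖c‖⁻¹ • c := smul_nonneg (by positivity) hc
  calc τ.toFun c = ENNReal.ofReal ‖c‖ * τ.toFun (‖c‖⁻¹ • c) := by
        rw [← τ.map_smul _ _ hn hunit, smul_inv_smul₀ hn.ne']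
    _ ≤ ENNReal.ofReal ‖c‖ * dTau τ c := by
        gcongr
        refine τ.toFun_le_dTau hc hunit ?_ ?_
        · rw [norm_smul, norm_inv, norm_norm, inv_mul_cancel₀ hn.ne']
        · exact Submodule.smul_of_tower_mem _ _ (self_mem_closedRightIdeal c)

lemma dTau_mono (hh : 0 ≤ h) (hc : 0 ≤ c) (hch : c ∈ closedRightIdeal h) :
    dTau τ c ≤ dTau τ h :=
  (dTau_le_iff τ).mpr fun ε hε => τ.toFun_le_dTau hh (fEps_nonneg ε c) (norm_fEps_le ε c)
    (fEps_mem_closedRightIdeal hε hc.isSelfAdjoint hch)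

lemma dTau_le_toFun_of_mul_eq (hc : IsSelfAdjoint c) (hg : 0 ≤ g) (h : c * g = c) :
    dTau τ c ≤ τ.toFun g := by
  refine (dTau_le_iff τ).mpr fun ε hε =>
    τ.toFun_le_of_mul_eq (fEps_nonneg ε c) (norm_fEps_le ε c) hg ?_
  rw [fEps_eq_cutoffQuot_mul hε hc, mul_assoc, h]

lemma toFun_fEps_le_mul_toFun (hε : 0 < ε) (hh : 0 ≤ h) :
    τ.toFun (fEps ε h) ≤ ENNReal.ofReal (2 / ε) * τ.toFun h := by
  have hε' : 0 < 2 / ε := by positivity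
  rw [← τ.map_smul _ _ hε' hh]
  refine τ.toFun_le_of_commute (fEps_nonneg ε h) ?_ ?_
  · rw [fEps, ← cfcₙ_const_mul_id (2 / ε) h]
    refine cfcₙ_mono fun t ht => ?_
    have ht0 := quasispectrum_nonneg_of_nonneg h hh t ht
    rw [← cutoffQuot_mul_self hε]
    exact mul_le_mul_of_nonneg_right (cutoffQuot_le hε t) ht0
  · exact ((Commute.refl h).cfcₙ_real _).smul_right _

lemma toFun_fEps_star_mul_self (hε : 0 < ε) (x : R) :
    τ.toFun (fEps ε (star x * x)) = τ.toFun (fEps ε (x * star x)) := by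
  have hp := IsSelfAdjoint.star_mul_self x
  have hq := IsSelfAdjoint.mul_star_self x
  set θ := cfcₙ (cutoffQuot ε) (star x * x)
  have hθ0 : 0 ≤ θ := cfcₙ_cutoffQuot_nonneg hε _
  have hθx : x * θ = cfcₙ (cutoffQuot ε) (x * star x) * x :=
    mul_cfcₙ_eq_cfcₙ_mul hp hq (mul_assoc x (star x) x).symm (continuous_cutoffQuot hε)
      (cutoffQuot_zero ε)
  have hcomm : Commute θ (star x * x) := (Commute.refl _).cfcₙ_real _
  have hleft : star (x * CFC.sqrt θ) * (x * CFC.sqrt θ) = fEps ε (star x * x) := by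
    rw [fEps_eq_cutoffQuot_mul hε hp, ← sqrt_mul_mul_sqrt_of_commute hθ0 hcomm, star_mul,
      star_sqrt]
    simp only [mul_assoc]
  have hright : x * CFC.sqrt θ * star (x * CFC.sqrt θ) = fEps ε (x * star x) := by
    calc x * CFC.sqrt θ * star (x * CFC.sqrt θ) = x * (CFC.sqrt θ * CFC.sqrt θ) * star x := by
          simp only [star_mul, star_sqrt, mul_assoc]
      _ = fEps ε (x * star x) := by
          rw [CFC.sqrt_mul_sqrt_self θ hθ0, hθx, mul_assoc, fEps_eq_cutoffQuot_mul hε hq]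
  rw [← hleft, ← hright, τ.map_star_mul_self]

lemma dTau_star_mul_self (x : R) : dTau τ (star x * x) = dTau τ (x * star x) :=
  iSup_congr fun _ => toFun_fEps_star_mul_self τ (by positivity) x

end QuasiTraceBasic

lemma exists_dTau_le_of_omegaOn_lt {B : Type*} [NonUnitalCStarAlgebra B] [PartialOrder B]
    {S : Set (QuasiTrace B)} {a : B} {K : ℝ≥0∞} (h : omegaOn S a < K) :
    ∃ δ > 0, ∃ L < K, ∀ τ ∈ S, dTau τ a ≤ τ.toFun (fEps δ a) + L := by
  obtain ⟨n, hn⟩ := iInf_lt_iff.mp h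
  exact ⟨1 / (n + 1), by positivity, _, hn, fun τ hτ => tsub_le_iff_left.mp <|
    le_iSup₂ (f := fun τ (_ : τ ∈ S) => dTau τ a - τ.toFun (fEps (1 / (n + 1)) a)) τ hτ⟩

lemma omegaOn_le_of_dTau_le {B : Type*} [NonUnitalCStarAlgebra B] [PartialOrder B]
    {S : Set (QuasiTrace B)} {b : B} {K : ℝ≥0∞}
    (h : ∀ τ ∈ S, dTau τ b ≤ τ.toFun (fEps 1 b) + K) : omegaOn S b ≤ K :=
  iInf_le_of_le 0 <| iSup₂_le fun τ hτ => tsub_le_iff_left.mpr <| by simpa using h τ hτ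

/-! ### Subadditivity of dimension functions -/

section MatrixTrick

/- A 2-quasitrace is additive only on commuting squares, so `E² - H ≥ 0` would not be enough below.
Here `H = (Ψ r)⋆ (Ψ r)` equals `2T - T²` for `T = r⋆ Θ r`, and `T E = T`, so that `E² - H` is the
square `(E - T)²`, which commutes with `H`. -/
lemma exists_mul_self_eq_add_star_mul_self {M : Type*} [NonUnitalRing M] [StarRing M]
    {r E Θ Ψ : M} (hE : IsSelfAdjoint E) (hrE : r * E = r) (hΘ : IsSelfAdjoint Θ)
    (hΨ : IsSelfAdjoint Ψ) (hΨΘ : Ψ * Ψ + Θ * (r * star r) * Θ = Θ + Θ) :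
    ∃ Z, E * E = star (Ψ * r) * (Ψ * r) + star Z * Z ∧
      Commute (star (Ψ * r) * (Ψ * r)) (star Z * Z) := by
  set T := star r * Θ * r with hTdef
  have hT : star T = T := by simp only [hTdef, star_mul, star_star, hΘ.star_eq, mul_assoc]
  have hTE : T * E = T := by rw [hTdef, mul_assoc, hrE]
  have hET : E * T = T := by simpa only [star_mul, hE.star_eq, hT] using congrArg star hTE
  have hH : star (Ψ * r) * (Ψ * r) = T + T - T * T := by
    calc star (Ψ * r) * (Ψ * r) = star r * (Ψ * Ψ) * r := by
          simp only [star_mul, hΨ.star_eq, mul_assoc]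
      _ = T + T - T * T := by
          rw [eq_sub_of_add_eq hΨΘ]
          simp only [hTdef, mul_add, mul_sub, add_mul, sub_mul, mul_assoc]
  have hsq : star (E - T) * (E - T) = E * E - (T + T - T * T) := by
    simp only [star_sub, hE.star_eq, hT, mul_sub, sub_mul, hET, hTE]
    abel
  have hcomm : Commute T (E * E) := by
    rw [Commute, SemiconjBy, ← mul_assoc, hTE, hTE, mul_assoc, hET, hET]
  have hTT : Commute (T + T - T * T) (E * E) :=
    (hcomm.add_left hcomm).sub_left (hcomm.mul_left hcomm)
  refine ⟨E - T, ?_, ?_⟩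
  · rw [hH, hsq, add_sub_cancel]
  · rw [hH, hsq]
    exact hTT.sub_right (.refl _)

variable {B : Type*} [NonUnitalCStarAlgebra B] [PartialOrder B]

lemma QuasiTrace.exists_matrix_extension_single (τ : QuasiTrace B) :
    ∃ σ : Matrix (Fin 2) (Fin 2) B → ℝ≥0∞, (∀ x, σ (.single 0 0 x) = τ.toFun x) ∧
    (∀ x, σ (.single 1 1 (star x * x)) = τ.toFun (x * star x)) ∧
    (∀ x y, Commute (star x * x) (star y * y) →
      σ (star x * x + star y * y) = σ (star x * x) + σ (star y * y)) ∧
    ∀ x, σ (star x * x) = σ (x * star x) := by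
  obtain ⟨σ, hσ, -, -, hadd, hstar⟩ := τ.exists_matrix_extension
  have hσ₀ (x : B) : σ (.single 0 0 x) = τ.toFun x := by
    rw [← hσ x]
    congr 1
    ext i j
    simp only [Matrix.single_apply, eq_comm]
  refine ⟨σ, hσ₀, fun x => ?_, fun x y => hadd _ _ ⟨x, rfl⟩ ⟨y, rfl⟩, hstar⟩
  simpa only [Matrix.star_eq_conjTranspose, Matrix.conjTranspose_single,
    Matrix.single_mul_single_same, hσ₀] using hstar (.single 0 1 x)

lemma QuasiTrace.toFun_mul_mul_le (τ : QuasiTrace B) {P Q d₁ d₂ θ ψ : B}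
    (h₁ : IsSelfAdjoint d₁) (h₂ : IsSelfAdjoint d₂) (hP : P * d₁ = P) (hQ : Q * d₂ = Q)
    (hθ : IsSelfAdjoint θ) (hψ : IsSelfAdjoint ψ)
    (hψθ : ψ * ψ + θ * (P * star P + Q * star Q) * θ = θ + θ) :
    τ.toFun (ψ * (P * star P + Q * star Q) * ψ) ≤ τ.toFun (d₁ * d₁) + τ.toFun (d₂ * d₂) := by
  obtain ⟨σ, hσ₀, hσ₁, hadd, hstar⟩ := τ.exists_matrix_extension_single
  set s := P * star P + Q * star Q with hs
  let r : Matrix (Fin 2) (Fin 2) B := .single 0 0 P + .single 0 1 Q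
  let D₁ : Matrix (Fin 2) (Fin 2) B := .single 0 0 d₁
  let D₂ : Matrix (Fin 2) (Fin 2) B := .single 1 1 d₂
  let Ψ : Matrix (Fin 2) (Fin 2) B := .single 0 0 ψ
  have hrr : r * star r = .single 0 0 s := by
    simp [r, hs, Matrix.star_eq_conjTranspose, add_mul, mul_add, Matrix.single_add]
  have hrE : r * (D₁ + D₂) = r := by simp [r, D₁, D₂, add_mul, mul_add, hP, hQ]
  have hD₁ : star D₁ = D₁ := by simp [D₁, Matrix.star_eq_conjTranspose, h₁.star_eq]
  have hD₂ : star D₂ = D₂ := by simp [D₂, Matrix.star_eq_conjTranspose, h₂.star_eq]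
  have hΨ : star Ψ = Ψ := by simp [Ψ, Matrix.star_eq_conjTranspose, hψ.star_eq]
  have hΨΘ : Ψ * Ψ + .single 0 0 θ * (r * star r) * .single 0 0 θ =
      .single 0 0 θ + .single 0 0 θ := by
    simp [Ψ, hrr, hψθ, ← Matrix.single_add]
  obtain ⟨Z, hZ, hcomm⟩ := exists_mul_self_eq_add_star_mul_self (r := r) (Ψ := Ψ)
    (show star (D₁ + D₂) = _ by rw [star_add, hD₁, hD₂]) hrE
    (by simp [IsSelfAdjoint, Matrix.star_eq_conjTranspose, hθ.star_eq]) hΨ hΨΘ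
  calc τ.toFun (ψ * s * ψ) = σ (Ψ * r * star (Ψ * r)) := by
        rw [star_mul, hΨ, mul_assoc Ψ, ← mul_assoc r, hrr]
        simp [Ψ, hσ₀, mul_assoc]
    _ = σ (star (Ψ * r) * (Ψ * r)) := (hstar _).symm
    _ ≤ σ ((D₁ + D₂) * (D₁ + D₂)) := by
        rw [hZ, hadd _ _ hcomm]
        exact le_self_add
    _ = σ (star D₁ * D₁ + star D₂ * D₂) := by
        simp [D₁, D₂, hD₁, hD₂, add_mul, mul_add]
    _ = σ (star D₁ * D₁) + σ (star D₂ * D₂) :=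
        hadd _ _ (by simp [hD₁, hD₂, D₁, D₂, Commute, SemiconjBy])
    _ = τ.toFun (d₁ * d₁) + τ.toFun (d₂ * d₂) := by
        congr 1
        · simp [hD₁, D₁, hσ₀]
        · simpa [hD₂, D₂, h₂.star_eq] using hσ₁ d₂

end MatrixTrick

section Subadditivity

variable (τ : QuasiTrace R) {ε : ℝ}

lemma exists_mul_self_add_mul_mul_eq (hε : 0 < ε) {s : R} (hs : 0 ≤ s) :
    ∃ θ ψ : R, IsSelfAdjoint θ ∧ IsSelfAdjoint ψ ∧ ψ * ψ + θ * s * θ = θ + θ ∧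
      ψ * s * ψ = fEps ε s + fEps ε s - fEps ε s * fEps ε s := by
  let u : ℝ → ℝ := fun t => √(cutoffQuot ε t + cutoffQuot ε t - cutoffQuot ε t * cutoff ε t)
  have hq := continuous_cutoffQuot hε
  have : Continuous u := by fun_prop
  have : u 0 = 0 := by simp [u]
  have huu (t : ℝ) : u t * u t + cutoffQuot ε t * cutoff ε t = cutoffQuot ε t + cutoffQuot ε t := by
    rw [Real.mul_self_sqrt, sub_add_cancel]
    nlinarith [cutoffQuot_nonneg hε t, cutoff_le_one ε t]
  have hψψ : cfcₙ u s * cfcₙ u s + cfcₙ (cutoffQuot ε) s * fEps ε s =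
      cfcₙ (cutoffQuot ε) s + cfcₙ (cutoffQuot ε) s := by
    rw [fEps, ← cfcₙ_mul u u s, ← cfcₙ_mul (cutoffQuot ε) (cutoff ε) s, ← cfcₙ_add ..,
      ← cfcₙ_add ..]
    simp only [huu]
  have hcomm : cfcₙ u s * s = s * cfcₙ u s := (Commute.refl s).cfcₙ_real u
  refine ⟨cfcₙ (cutoffQuot ε) s, cfcₙ u s, cfcₙ_predicate _ s, cfcₙ_predicate _ s, ?_, ?_⟩
  · rwa [mul_assoc, ← fEps_eq_mul_cutoffQuot hε hs.isSelfAdjoint]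
  · rw [mul_assoc, ← hcomm, ← mul_assoc, eq_sub_of_add_eq hψψ, sub_mul, add_mul, mul_assoc,
      show fEps ε s * s = s * fEps ε s from (Commute.refl s).cfcₙ_real _, ← mul_assoc,
      ← fEps_eq_cutoffQuot_mul hε hs.isSelfAdjoint]

lemma toFun_fEps_mul_star_add_le (hε : 0 < ε) {P Q d₁ d₂ : R} (h₁ : IsSelfAdjoint d₁)
    (h₂ : IsSelfAdjoint d₂) (hP : P * d₁ = P) (hQ : Q * d₂ = Q) :
    τ.toFun (fEps ε (P * star P + Q * star Q)) ≤ τ.toFun (d₁ * d₁) + τ.toFun (d₂ * d₂) := by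
  have hs : 0 ≤ P * star P + Q * star Q :=
    add_nonneg (mul_star_self_nonneg P) (mul_star_self_nonneg Q)
  obtain ⟨θ, ψ, hθ, hψ, hψθ, hψs⟩ := exists_mul_self_add_mul_mul_eq hε hs
  set φ := fEps ε (P * star P + Q * star Q)
  have hφ : φ ≤ φ + φ - φ * φ := by
    rw [add_sub_assoc]
    exact le_add_of_nonneg_right
      (sub_nonneg.mpr (mul_self_le_self (fEps_nonneg ε _) (norm_fEps_le ε _)))
  calc τ.toFun φ ≤ τ.toFun (φ + φ - φ * φ) :=
        τ.toFun_le_of_commute (fEps_nonneg ε _) hφ <|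
          ((Commute.refl φ).add_right (.refl φ)).sub_right ((Commute.refl φ).mul_right (.refl φ))
    _ ≤ τ.toFun (d₁ * d₁) + τ.toFun (d₂ * d₂) := hψs ▸ τ.toFun_mul_mul_le h₁ h₂ hP hQ hθ hψ hψθ

lemma dTau_add_le {p q : R} (hp : 0 ≤ p) (hq : 0 ≤ q) :
    dTau τ (p + q) ≤ dTau τ p + dTau τ q := by
  have hlim {x : R} (hx : 0 ≤ x) : Tendsto
      (fun ε => CFC.sqrt x * fEps ε x * star (CFC.sqrt x * fEps ε x)) (𝓝[>] 0) (𝓝 x) := by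
    have h := tendsto_mul_fEps hx (z := CFC.sqrt x)
      (by rw [star_sqrt]; exact sqrt_mem_closedRightIdeal hx)
    simpa only [star_sqrt, CFC.sqrt_mul_sqrt_self x hx] using h.mul h.star
  have hsq (x : R) {ε : ℝ} (hε : 0 < ε) :
      τ.toFun (fEps ε x * fEps ε x) ≤ dTau τ x := by
    have hx0 := fEps_nonneg ε x
    refine (τ.toFun_le_of_commute hx0.isSelfAdjoint.mul_self_nonneg
      (mul_self_le_self hx0 (norm_fEps_le ε x)) ?_).trans (toFun_fEps_le_dTau τ hε x)
    exact (Commute.refl _).mul_left (.refl _)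
  refine dTau_le_of_tendsto τ ((hlim hp).add (hlim hq))
    (.of_forall fun ε => add_nonneg (mul_star_self_nonneg _) (mul_star_self_nonneg _)) ?_
  filter_upwards [self_mem_nhdsWithin] with ε hε
  have hε' : 0 < ε / 2 := half_pos hε
  refine (dTau_le_iff τ).mpr fun δ hδ => (toFun_fEps_mul_star_add_le τ hδ
    (star_fEps (ε / 2) p) (star_fEps (ε / 2) q) ?_ ?_).trans (add_le_add (hsq p hε') (hsq q hε'))
  · rw [mul_assoc, fEps_mul_fEps hε' le_rfl]
  · rw [mul_assoc, fEps_mul_fEps hε' le_rfl]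

lemma dTau_star_add_mul_add_le (x y : R) :
    dTau τ (star (x + y) * (x + y)) ≤ dTau τ (star x * x) + dTau τ (star y * y) := by
  have hx := star_mul_self_nonneg x
  have hy := star_mul_self_nonneg y
  refine (dTau_mono τ (add_nonneg hx hy) (star_mul_self_nonneg _) ?_).trans (dTau_add_le τ hx hy)
  have hmem {z : R} (hz : star z * z ≤ star x * x + star y * y) :
      star z ∈ closedRightIdeal (star x * x + star y * y) :=
    mem_closedRightIdeal_of_mul_star_self_le (by rwa [star_star]) (self_mem_closedRightIdeal _)
  rw [star_add]
  exact mul_mem_closedRightIdeal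
    (add_mem (hmem (le_add_of_nonneg_right hy)) (hmem (le_add_of_nonneg_left hx))) _

lemma dTau_star_mul_mul_le_left (x b : R) :
    dTau τ (star (b * x) * (b * x)) ≤ dTau τ (star x * x) := by
  refine dTau_mono τ (star_mul_self_nonneg x) (star_mul_self_nonneg _) ?_
  rw [star_mul, mul_assoc]
  exact mul_mem_closedRightIdeal (star_mem_closedRightIdeal_star_mul_self x) _

lemma dTau_star_mul_mul_le_right (x b : R) :
    dTau τ (star (x * b) * (x * b)) ≤ dTau τ (star x * x) := by
  rw [dTau_star_mul_self, dTau_star_mul_self]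
  simpa only [star_mul, star_star] using dTau_star_mul_mul_le_left τ (star x) (star b)

end Subadditivity

/-! ### The Pedersen ideal -/

section PedersenIdeal

variable {B : Type*} [NonUnitalCStarAlgebra B]

/- In the unitization `u = 1 - (g - y)` is invertible and `f u = f y`. -/
lemma exists_mul_mul_eq_of_norm_sub_lt_one {f g y : B} (hfg : f * g = f) (h : ‖g - y‖ < 1) :
    ∃ w, f * y * w = f := by
  have h' : ‖((g - y : B) : Unitization ℂ B)‖ < 1 := by rwa [Unitization.norm_inr]
  let u := Units.oneSub _ h'
  have hfu : (f : Unitization ℂ B) * u = (f * y : B) := by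
    rw [Units.val_oneSub, mul_sub, mul_one, ← Unitization.inr_mul, ← Unitization.inr_sub, mul_sub,
      hfg, sub_sub_cancel]
  let v : Unitization ℂ B := (u⁻¹ : (Unitization ℂ B)ˣ) * g
  have hv : v = (v.snd : Unitization ℂ B) := Unitization.ext (by simp [v]) (by simp)
  refine ⟨v.snd, Unitization.inr_injective (R := ℂ) ?_⟩
  rw [Unitization.inr_mul, ← hv, ← hfu, mul_assoc, Units.mul_inv_cancel_left, ← Unitization.inr_mul,
    hfg]

lemma mem_pedersen_iff {x : B} :
    x ∈ pedersen B ↔ ∀ I, IsIdealIn B Set.univ I → Dense I → x ∈ I := by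
  simp [pedersen, pedersenIn, Dense, Set.subset_def]

lemma fEps_mem_pedersen {ε : ℝ} (hε : 0 < ε) (h : B) : fEps ε h ∈ pedersen B := by
  refine mem_pedersen_iff.mpr fun I hI hId => ?_
  obtain ⟨y, hy, hgy⟩ := Metric.mem_closure_iff.mp (hId (fEps (ε / 2) h)) 1 one_pos
  obtain ⟨w, hw⟩ := exists_mul_mul_eq_of_norm_sub_lt_one (fEps_mul_fEps (half_pos hε) le_rfl h)
    (by rwa [← dist_eq_norm])
  have hideal := hI.2.2.2.2
  rw [← hw]
  exact (hideal _ (hideal y hy _ trivial).2 w trivial).1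

end PedersenIdeal

@[simp] lemma dTau_zero {B : Type*} [NonUnitalCStarAlgebra B] [PartialOrder B] (τ : QuasiTrace B) :
    dTau τ 0 = 0 := by
  simp [dTau, fEps, τ.map_zero]

section FiniteDimension

variable (τ : QuasiTrace R)

lemma dTau_le_dTau_star_mul_self {e : R} (he : 0 ≤ e) : dTau τ e ≤ dTau τ (star e * e) :=
  dTau_mono τ (star_mul_self_nonneg e) he <| by
    simpa only [he.isSelfAdjoint.star_eq] using star_mem_closedRightIdeal_star_mul_self e

lemma dTau_star_mul_fEps_mul_self_lt_top {ε : ℝ} (hε : 0 < ε) (x : R) :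
    dTau τ (star (x * fEps ε (star x * x)) * (x * fEps ε (star x * x))) < ∞ := by
  have hε' : 0 < ε / 2 := half_pos hε
  refine (dTau_le_toFun_of_mul_eq τ (.star_mul_self _)
    (fEps_nonneg (ε / 2) (star x * x)) ?_).trans_lt
      (τ.finite_on_pedersen _ (fEps_mem_pedersen hε' _) (fEps_nonneg _ _))
  simp only [mul_assoc, fEps_mul_fEps hε' le_rfl]

lemma tendsto_mul_fEps_star_mul_self (x : R) :
    Tendsto (fun ε => x * fEps ε (star x * x)) (𝓝[>] 0) (𝓝 x) :=
  tendsto_mul_fEps (star_mul_self_nonneg x) (star_mem_closedRightIdeal_star_mul_self x)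

lemma dTau_lt_top_of_mem_pedersen {e : R} (he : 0 ≤ e) (heP : e ∈ pedersen R) :
    dTau τ e < ∞ := by
  let I : Set R := {x | dTau τ (star x * x) < ∞}
  have hI : IsIdealIn R Set.univ I := by
    refine ⟨Set.subset_univ _, by simp [I], fun x hx y hy => ?_, fun x hx => ?_, fun x hx b _ => ?_⟩
    · exact (dTau_star_add_mul_add_le τ x y).trans_lt (ENNReal.add_lt_top.mpr ⟨hx, hy⟩)
    · simpa [I] using hx
    · exact ⟨(dTau_star_mul_mul_le_right τ x b).trans_lt hx,
        (dTau_star_mul_mul_le_left τ x b).trans_lt hx⟩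
  have hId : Dense I := fun x =>
    mem_closure_of_tendsto (tendsto_mul_fEps_star_mul_self x) <|
      eventually_mem_nhdsWithin.mono fun ε hε => dTau_star_mul_fEps_mul_self_lt_top τ hε x
  exact (dTau_le_dTau_star_mul_self τ he).trans_lt (mem_pedersen_iff.mp heP I hI hId)

end FiniteDimension

/-! ### Quasitraces on a stabilization -/

section NullSpace

variable (τ : QuasiTrace R)

lemma dTau_eq_zero_iff {h : R} (hh : 0 ≤ h) : dTau τ h = 0 ↔ τ.toFun h = 0 := by
  refine ⟨fun h0 => ?_, fun h0 => ?_⟩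
  · simpa [h0] using τ.toFun_le_norm_mul_dTau hh
  · refine nonpos_iff_eq_zero.mp ((dTau_le_iff τ).mpr fun ε hε => ?_)
    simpa [h0] using toFun_fEps_le_mul_toFun τ hε hh

/-- The left kernel of `τ`. It is defined through `d_τ` rather than `τ`, since only `d_τ` is known
to be subadditive. -/
def QuasiTrace.leftKernel : Submodule ℂ R where
  carrier := {x | dTau τ (star x * x) = 0}
  zero_mem' := by simp
  add_mem' {x y} hx hy := by
    refine nonpos_iff_eq_zero.mp ((dTau_star_add_mul_add_le τ x y).trans_eq ?_)
    rw [Set.mem_ofPred_eq.mp hx, Set.mem_ofPred_eq.mp hy, add_zero]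
  smul_mem' c x hx := by
    refine nonpos_iff_eq_zero.mp (hx ▸ dTau_mono τ (star_mul_self_nonneg x)
      (star_mul_self_nonneg _) ?_)
    rw [star_smul, smul_mul_smul_comm]
    exact Submodule.smul_mem _ _ (self_mem_closedRightIdeal _)

lemma QuasiTrace.isClosed_leftKernel : IsClosed (τ.leftKernel : Set R) := by
  refine isClosed_of_closure_subset fun x hx => ?_
  obtain ⟨u, hu, hux⟩ := mem_closure_iff_seq_limit.mp hx
  exact nonpos_iff_eq_zero.mp <| dTau_le_of_tendsto τ (hux.star.mul hux)
    (.of_forall fun n => star_mul_self_nonneg _) (.of_forall fun n => (hu n).le)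

lemma QuasiTrace.isZero_of_leftKernel_eq_top (h : τ.leftKernel = ⊤) : τ.IsZero := by
  intro a
  by_cases ha : 0 ≤ a
  · obtain ⟨z, rfl⟩ := CStarAlgebra.nonneg_iff_eq_star_mul_self.mp ha
    have hz : z ∈ τ.leftKernel := h ▸ Submodule.mem_top
    exact (dTau_eq_zero_iff τ ha).mp hz
  · exact τ.zero_of_not_nonneg a ha

end NullSpace

lemma exists_forall_mem_closedRightIdeal {a : ℕ → R} (ha : ∀ n, 0 ≤ a n) (ha1 : ∀ n, ‖a n‖ ≤ 1) :
    ∃ h, 0 ≤ h ∧ ∀ n, a n ∈ closedRightIdeal h := by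
  let u (n : ℕ) : R := (1 / 2 : ℝ) ^ n • a n
  have hu0 (n : ℕ) : 0 ≤ u n := smul_nonneg (by positivity) (ha n)
  have hu : Summable u := Summable.of_norm_bounded summable_geometric_two fun n => by
    rw [norm_smul, Real.norm_of_nonneg (by positivity)]
    exact mul_le_of_le_one_right (by positivity) (ha1 n)
  refine ⟨∑' n, u n, tsum_nonneg hu0, fun n => ?_⟩
  have hsqrt : CFC.sqrt (u n) ∈ closedRightIdeal (∑' n, u n) := by
    refine mem_closedRightIdeal_of_mul_star_self_le ?_ (self_mem_closedRightIdeal _)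
    rw [star_sqrt, CFC.sqrt_mul_sqrt_self _ (hu0 n)]
    exact hu.le_tsum n fun m _ => hu0 m
  have hun : u n ∈ closedRightIdeal (∑' n, u n) :=
    CFC.sqrt_mul_sqrt_self _ (hu0 n) ▸ mul_mem_closedRightIdeal hsqrt _
  have han : (2 : ℝ) ^ n • u n = a n := by
    rw [smul_smul, ← mul_pow]
    norm_num
  exact han ▸ Submodule.smul_of_tower_mem _ _ hun

namespace Stabilization

section Corner

variable {A W : Type*} [NonUnitalCStarAlgebra A] [NonUnitalCStarAlgebra W] (SB : Stabilization A W)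

lemma isometry_emb (i j : ℕ) : Isometry (SB.emb i j) :=
  AddMonoidHomClass.isometry_of_norm _ (SB.norm_emb i j)

lemma emb_mul_emb (i j k : ℕ) (a b : A) : SB.emb i j a * SB.emb j k b = SB.emb i k (a * b) := by
  rw [SB.emb_mul, if_pos rfl]

lemma emb_mul_mul_emb_mem_range (u v : A) (w : W) :
    SB.emb 0 0 u * w * SB.emb 0 0 v ∈ LinearMap.range (SB.emb 0 0) := by
  let f : W →ₗ[ℂ] W := LinearMap.mulRight ℂ (SB.emb 0 0 v) ∘ₗ LinearMap.mulLeft ℂ (SB.emb 0 0 u)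
  have hf : Continuous f := by
    change Continuous fun w => SB.emb 0 0 u * w * SB.emb 0 0 v
    fun_prop
  have hspan : Submodule.span ℂ {w | ∃ (i j : ℕ) (a : A), w = SB.emb i j a} ≤
      (LinearMap.range (SB.emb 0 0)).comap f := by
    rw [Submodule.span_le]
    rintro _ ⟨i, j, a, rfl⟩
    change SB.emb 0 0 u * SB.emb i j a * SB.emb 0 0 v ∈
      LinearMap.range (SB.emb 0 0)
    rw [SB.emb_mul]
    split_ifs
    · rw [SB.emb_mul]
      split_ifs
      exacts [LinearMap.mem_range_self _ _, zero_mem _]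
    · exact (zero_mul (SB.emb 0 0 v)).symm ▸ zero_mem _
  have hcl : IsClosed (f ⁻¹' (LinearMap.range (SB.emb 0 0))) :=
    (SB.isometry_emb 0 0).isClosedEmbedding.isClosed_range.preimage hf
  exact hcl.closure_subset_iff.mpr hspan (SB.dense_span w)

lemma exists_continuous_corner (u v : A) :
    ∃ Φ : W → A, Continuous Φ ∧ ∀ w, SB.emb 0 0 (Φ w) = SB.emb 0 0 u * w * SB.emb 0 0 v := by
  choose Φ hΦ using SB.emb_mul_mul_emb_mem_range u v
  refine ⟨Φ, (SB.isometry_emb 0 0).isEmbedding.continuous_iff.mpr ?_, hΦ⟩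
  simp only [Function.comp_def, hΦ]
  fun_prop

lemma emb_mem_closedRightIdeal {x h : A} (hx : x ∈ closedRightIdeal h) :
    SB.emb 0 0 x ∈ closedRightIdeal (SB.emb 0 0 h) := by
  refine map_mem_closure (f := SB.emb 0 0) (SB.isometry_emb 0 0).continuous hx ?_
  rintro _ ⟨w, rfl⟩
  exact ⟨SB.emb 0 0 w, by simp [SB.emb_mul_emb]⟩

lemma emb_mem_pedersen [PartialOrder A] [StarOrderedRing A] {h : A}
    (hh : h ∈ pedersen A) : SB.emb 0 0 h ∈ pedersen W := by
  refine mem_pedersen_iff.mpr fun J hJ hJd => ?_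
  obtain ⟨-, hzero, hadd, hneg, hmul⟩ := hJ
  refine mem_pedersen_iff.mp hh (SB.emb 0 0 ⁻¹' J) ⟨Set.subset_univ _, ?_, ?_, ?_, ?_⟩ fun x => ?_
  · simpa using hzero
  · intro x hx y hy
    simpa using hadd _ hx _ hy
  · intro x hx
    simpa using hneg _ hx
  · intro x hx b _
    simpa only [Set.mem_preimage, emb_mul_emb] using hmul _ hx (SB.emb 0 0 b) trivial
  · let d := x * star x + star x * x
    have hx : x ∈ closedRightIdeal d := mem_closedRightIdeal_of_mul_star_self_le
      (le_add_of_nonneg_right (star_mul_self_nonneg x)) (self_mem_closedRightIdeal d)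
    have hx' : star x ∈ closedRightIdeal d := mem_closedRightIdeal_of_mul_star_self_le
      (by simpa only [star_star] using le_add_of_nonneg_left (mul_star_self_nonneg x))
      (self_mem_closedRightIdeal d)
    have hd : 0 ≤ d := add_nonneg (mul_star_self_nonneg x) (star_mul_self_nonneg x)
    refine isClosed_closure.mem_of_tendsto (tendsto_fEps_mul_mul_fEps hd hx hx')
      (.of_forall fun ε => ?_)
    obtain ⟨Φ, hΦc, hΦ⟩ := SB.exists_continuous_corner (fEps ε d) (fEps ε d)
    have hΦx : Φ (SB.emb 0 0 x) = fEps ε d * x * fEps ε d :=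
      (SB.isometry_emb 0 0).injective (by simp only [hΦ, emb_mul_emb])
    rw [← hΦx]
    refine map_mem_closure hΦc (hJd _) fun w hw => ?_
    rw [Set.mem_preimage, hΦ]
    exact (hmul _ (hmul w hw _ trivial).2 _ trivial).1

end Corner

variable (SB : Stabilization A W) (τ : QuasiTrace W)

lemma emb_nonneg {a : A} (ha : 0 ≤ a) : 0 ≤ SB.emb 0 0 a := by
  obtain ⟨z, rfl⟩ := CStarAlgebra.nonneg_iff_eq_star_mul_self.mp ha
  rw [← SB.emb_mul_emb 0 0 0, ← SB.emb_star]
  exact star_mul_self_nonneg _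

/-- The norm `‖τ|_A‖` of a quasitrace on the corner `A ⊗ e₁₁`. -/
def cornerNorm : ℝ≥0∞ := ⨆ a : {a : A // 0 ≤ a ∧ ‖a‖ ≤ 1}, τ.toFun (SB.emb 0 0 a)

lemma cornerNorm_lt_top (halg : pedersen A = Set.univ) : SB.cornerNorm τ < ∞ := by
  by_contra! htop
  have hlarge (n : ℕ) : ∃ a : A, (0 ≤ a ∧ ‖a‖ ≤ 1) ∧ n < τ.toFun (SB.emb 0 0 a) := by
    obtain ⟨a, ha⟩ := lt_iSup_iff.mp ((ENNReal.natCast_lt_top n).trans_le htop)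
    exact ⟨a, a.2, ha⟩
  choose a ha hna using hlarge
  obtain ⟨h, hh, hah⟩ := exists_forall_mem_closedRightIdeal (fun n => (ha n).1) fun n => (ha n).2
  have hfin : dTau τ (SB.emb 0 0 h) < ∞ :=
    dTau_lt_top_of_mem_pedersen τ (SB.emb_nonneg hh) (SB.emb_mem_pedersen (halg ▸ trivial))
  obtain ⟨n, hn⟩ := ENNReal.exists_nat_gt hfin.ne
  exact (hn.trans (hna n)).not_ge (τ.toFun_le_dTau (SB.emb_nonneg hh) (SB.emb_nonneg (ha n).1)
    ((SB.norm_emb _ _ _).trans_le (ha n).2) (SB.emb_mem_closedRightIdeal (hah n)))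

lemma toFun_emb_eq_zero (h0 : SB.cornerNorm τ = 0) {a : A} (ha : 0 ≤ a) :
    τ.toFun (SB.emb 0 0 a) = 0 := by
  let c : ℝ := (‖a‖ + 1)⁻¹
  have hc : 0 < c := by positivity
  have hca : ‖c • a‖ ≤ 1 := by
    rw [norm_smul, Real.norm_of_nonneg hc.le]
    exact inv_mul_le_one_of_le₀ (by linarith) (by positivity)
  have hτc : τ.toFun (c • SB.emb 0 0 a) = 0 := by
    rw [← LinearMap.map_smul_of_tower]
    exact ENNReal.iSup_eq_zero.mp h0 ⟨c • a, smul_nonneg hc.le ha, hca⟩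
  rw [τ.map_smul c _ hc (SB.emb_nonneg ha)] at hτc
  exact (mul_eq_zero.mp hτc).resolve_left (ENNReal.ofReal_pos.mpr hc).ne'

lemma cornerNorm_ne_zero (hτ : ¬ τ.IsZero) : SB.cornerNorm τ ≠ 0 := by
  refine fun h0 => hτ (τ.isZero_of_leftKernel_eq_top ?_)
  have hspan : Submodule.span ℂ {w | ∃ (i j : ℕ) (a : A), w = SB.emb i j a} ≤ τ.leftKernel := by
    rw [Submodule.span_le]
    rintro _ ⟨i, j, a, rfl⟩
    have hswap : dTau τ (SB.emb j j (star a * a)) = dTau τ (SB.emb 0 0 (a * star a)) := by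
      simpa only [SB.emb_star, emb_mul_emb] using dTau_star_mul_self τ (SB.emb 0 j a)
    change dTau τ (star (SB.emb i j a) * SB.emb i j a) = 0
    rw [SB.emb_star, emb_mul_emb, hswap,
      dTau_eq_zero_iff τ (SB.emb_nonneg (mul_star_self_nonneg a))]
    exact SB.toFun_emb_eq_zero τ h0 (mul_star_self_nonneg a)
  refine eq_top_iff.mpr fun x _ => ?_
  exact τ.isClosed_leftKernel.closure_subset_iff.mpr hspan (SB.dense_span x)

end Stabilization

section Scale

variable {A W : Type*} [NonUnitalCStarAlgebra A] [PartialOrder A]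
  [NonUnitalCStarAlgebra W] [PartialOrder W]

/-- The quasitrace `c · τ`. -/
def QuasiTrace.scale (c : ℝ≥0∞) (hc : c ≠ ∞) (τ : QuasiTrace W) : QuasiTrace W where
  toFun a := c * τ.toFun a
  zero_of_not_nonneg a ha := by rw [τ.zero_of_not_nonneg a ha, mul_zero]
  map_zero := by rw [τ.map_zero, mul_zero]
  map_smul r a hr ha := by rw [τ.map_smul r a hr ha, mul_left_comm]
  map_add_of_commute a b ha hb h := by rw [τ.map_add_of_commute a b ha hb h, mul_add]
  map_star_mul_self x := by rw [τ.map_star_mul_self x]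
  lowerSemicontinuousOn :=
    (ENNReal.continuous_const_mul hc).comp_lowerSemicontinuousOn τ.lowerSemicontinuousOn
      fun _ _ h => mul_le_mul_right h c
  finite_on_pedersen a ha h := ENNReal.mul_lt_top hc.lt_top (τ.finite_on_pedersen a ha h)
  exists_matrix_extension := by
    obtain ⟨σ, hσ, hσ0, hσ_smul, hσ_add, hσ_star⟩ := τ.exists_matrix_extension
    refine ⟨fun x => c * σ x, fun a => by simp only [hσ], by simp only [hσ0, mul_zero],
      fun r x hr hx => ?_, fun x y hx hy hxy => ?_, fun x => ?_⟩
    · simp only [hσ_smul r x hr hx, mul_left_comm]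
    · simp only [hσ_add x y hx hy hxy, mul_add]
    · simp only [hσ_star x]

lemma dTau_scale (c : ℝ≥0∞) (hc : c ≠ ∞) (τ : QuasiTrace W) (a : W) :
    dTau (τ.scale c hc) a = c * dTau τ a :=
  (ENNReal.mul_iSup ..).symm

lemma Stabilization.scale_mem_qtSet (SB : Stabilization A W) {τ : QuasiTrace W}
    (h0 : SB.cornerNorm τ ≠ 0) (htop : SB.cornerNorm τ ≠ ∞) :
    τ.scale (SB.cornerNorm τ)⁻¹ (ENNReal.inv_ne_top.mpr h0) ∈ QTSet SB := by
  change ⨆ a : {a : A // 0 ≤ a ∧ ‖a‖ ≤ 1}, (SB.cornerNorm τ)⁻¹ * τ.toFun (SB.emb 0 0 a) = 1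
  rw [← ENNReal.mul_iSup]
  exact ENNReal.inv_mul_cancel h0 htop

end Scale

lemma cuntzLE_of_forall_dTau_lt (SB : Stabilization A W) (halg : pedersen A = Set.univ)
    (hsc : StrictComparison W) {a e : W} (ha : 0 ≤ a) (he : 0 ≤ e)
    (hlt : ∀ τ ∈ QTSet SB, dTau τ a < dTau τ e) : CuntzLE a e := by
  refine hsc a e ha he fun τ hτ => ?_
  have hscaled := hlt _ <|
    SB.scale_mem_qtSet (SB.cornerNorm_ne_zero τ hτ) (SB.cornerNorm_lt_top τ halg).ne
  rw [dTau_scale, dTau_scale] at hscaled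
  exact lt_of_mul_lt_mul_left' hscaled

/-! ### Cuntz subequivalence -/

lemma toFun_fEps_le_toFun_fEps_fEps (τ : QuasiTrace R) {ε η : ℝ} (hε : 0 < ε) (hη : 0 < η)
    (hη1 : η ≤ 1) {a : R} (ha : IsSelfAdjoint a) :
    τ.toFun (fEps ε a) ≤ τ.toFun (fEps η (fEps (ε / 2) a)) :=
  τ.toFun_le_of_mul_eq (fEps_nonneg ε a) (norm_fEps_le ε a) (fEps_nonneg η _)
    (fEps_mul_fEps_fEps hε hη hη1 ha)

lemma exists_star_mul_self_eq_star_mul {s h : R} (hs : s ∈ closedRightIdeal h) (t : R) :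
    ∃ x ∈ closedRightIdeal h, star x * x = star (star s * t) * (star s * t) := by
  have hss := mul_star_self_nonneg s
  refine ⟨CFC.sqrt (s * star s) * t, mul_mem_closedRightIdeal ?_ t, ?_⟩
  · exact closedRightIdeal_le (mul_mem_closedRightIdeal hs _) (sqrt_mem_closedRightIdeal hss)
  · calc star (CFC.sqrt (s * star s) * t) * (CFC.sqrt (s * star s) * t)
        = star t * (CFC.sqrt (s * star s) * CFC.sqrt (s * star s)) * t := by
          simp only [star_mul, star_sqrt, mul_assoc]
      _ = star (star s * t) * (star s * t) := by
          simp only [CFC.sqrt_mul_sqrt_self _ hss, star_mul, star_star, mul_assoc]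

lemma CuntzLE.exists_norm_fEps_sub_lt {a e : R} (h : CuntzLE a e) (ha : 0 ≤ a) {ε η : ℝ}
    (hε : 0 < ε) (hη : 0 < η) : ∃ z, ‖fEps ε a - star z * e * z‖ < η := by
  obtain ⟨y, hy⟩ := h
  let k := CFC.sqrt (cfcₙ (cutoffQuot ε) a)
  have hk : star k = k := star_sqrt _
  have hkak : k * a * k = fEps ε a := by
    rw [sqrt_mul_mul_sqrt_of_commute (cfcₙ_cutoffQuot_nonneg hε a)
      ((Commute.refl a).cfcₙ_real _), fEps_eq_cutoffQuot_mul hε ha.isSelfAdjoint]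
  have hlim : Tendsto (fun n => ‖k‖ * ‖a - star (y n) * e * y n‖ * ‖k‖) atTop (𝓝 0) := by
    simpa using (hy.const_mul ‖k‖).mul_const ‖k‖
  obtain ⟨n, hn⟩ := (hlim.eventually_lt_const hη).exists
  refine ⟨y n * k, lt_of_le_of_lt ?_ hn⟩
  calc ‖fEps ε a - star (y n * k) * e * (y n * k)‖ = ‖k * (a - star (y n) * e * y n) * k‖ := by
        rw [star_mul, hk, mul_sub, sub_mul, hkak]
        simp only [mul_assoc]
    _ ≤ ‖k‖ * ‖a - star (y n) * e * y n‖ * ‖k‖ := norm_mul₃_le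

lemma CuntzLE.exists_star_mul_self_eq_fEps {a e : R} (h : CuntzLE a e) (ha : 0 ≤ a) (he : 0 ≤ e)
    {ε : ℝ} (hε : 0 < ε) : ∃ x ∈ closedRightIdeal e, star x * x = fEps ε a := by
  obtain ⟨z, hz⟩ := h.exists_norm_fEps_sub_lt ha (half_pos hε) one_pos
  let f := CFC.sqrt (fEps ε a)
  have hf : f * fEps (ε / 2) a = f := sqrt_mul_eq_sqrt (fEps_nonneg ε a) (star_fEps _ a)
    (fEps_mul_fEps (half_pos hε) le_rfl a)
  obtain ⟨w, hw⟩ := exists_mul_mul_eq_of_norm_sub_lt_one hf hz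
  obtain ⟨x, hx, hxf⟩ := exists_star_mul_self_eq_star_mul (mul_mem_closedRightIdeal_self e (z * f))
    (z * w)
  have hst : star (e * (z * f)) * (z * w) = f := by
    simpa only [star_mul, f, star_sqrt, he.isSelfAdjoint.star_eq, mul_assoc] using hw
  refine ⟨x, hx, ?_⟩
  rw [hxf, hst, star_sqrt, CFC.sqrt_mul_sqrt_self _ (fEps_nonneg ε a)]

lemma CuntzLE.exists_mem_closedRightIdeal_toFun_le {a e : R} (h : CuntzLE a e) (ha : 0 ≤ a)
    (he : 0 ≤ e) {δ : ℝ} (hδ : 0 < δ) :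
    ∃ d ∈ closedRightIdeal e, 0 ≤ d ∧ ∀ τ : QuasiTrace R, dTau τ d ≤ dTau τ a ∧
      ∀ η > 0, η ≤ 1 → τ.toFun (fEps δ a) ≤ τ.toFun (fEps η d) := by
  obtain ⟨x, hx, hxa⟩ := h.exists_star_mul_self_eq_fEps ha he (half_pos hδ)
  refine ⟨x * star x, mul_mem_closedRightIdeal hx _, mul_star_self_nonneg x, fun τ => ⟨?_, ?_⟩⟩
  · rw [← dTau_star_mul_self, hxa]
    exact dTau_mono τ ha (fEps_nonneg _ a)
      (fEps_mem_closedRightIdeal (half_pos hδ) ha.isSelfAdjoint (self_mem_closedRightIdeal a))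
  · intro η hη hη1
    rw [← toFun_fEps_star_mul_self τ hη, hxa]
    exact toFun_fEps_le_toFun_fEps_fEps τ hδ hη hη1 ha.isSelfAdjoint

/-! ### Orthogonal complements of hereditary subalgebras -/

lemma mem_perp_her {B : Type*} [NonUnitalCStarAlgebra B] {b y : B} (hyb : y * b = 0)
    (hby : b * y = 0) : y ∈ perp (her b) := by
  have hcl : IsClosed {c : B | y * c = 0 ∧ c * y = 0} :=
    (isClosed_eq (by fun_prop) continuous_const).inter (isClosed_eq (by fun_prop) continuous_const)
  refine fun c hc => hcl.closure_subset_iff.mpr ?_ hc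
  rintro _ ⟨w, rfl⟩
  constructor
  · rw [← mul_assoc, ← mul_assoc, hyb, zero_mul, zero_mul]
  · rw [mul_assoc, hby, mul_zero]

lemma fEps_mem_perp {B : Type*} [NonUnitalCStarAlgebra B] {C : Set B} {y : B}
    (hy : IsSelfAdjoint y) (h : y ∈ perp C) {ε : ℝ} (hε : 0 < ε) : fEps ε y ∈ perp C := by
  refine fun c hc => ⟨?_, ?_⟩
  · rw [fEps_eq_cutoffQuot_mul hε hy, mul_assoc, (h c hc).1, mul_zero]
  · rw [fEps_eq_mul_cutoffQuot hε hy, ← mul_assoc, (h c hc).2, zero_mul]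

lemma fEps_mem_her {e y : R} (he : 0 ≤ e) (hy : IsSelfAdjoint y) (h : y ∈ her e) {ε : ℝ}
    (hε : 0 < ε) : fEps ε y ∈ her e := by
  rw [mem_her_of_isSelfAdjoint he (star_fEps ε y)]
  exact fEps_mem_closedRightIdeal hε hy ((mem_her_of_isSelfAdjoint he hy).mp h)

lemma exists_mem_perp_her_dTau_le_add {e b g : R} (he : 0 ≤ e) (hb : IsSelfAdjoint b) (hg : 0 ≤ g)
    (hge : g ∈ closedRightIdeal e) (hgb : g * b = b) :
    ∃ c ∈ perp (her b) ∩ her e, 0 ≤ c ∧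
      ∀ τ : QuasiTrace R, dTau τ e ≤ dTau τ c + dTau τ g := by
  let r := CFC.sqrt e
  let x := r - r * g
  have hr : star r = r := star_sqrt e
  have hgs : star g = g := hg.isSelfAdjoint
  have hxs : star x = r - g * r := by simp only [x, star_sub, star_mul, hr, hgs]
  have hxb : x * b = 0 := by rw [sub_mul, mul_assoc, hgb, sub_self]
  have hbx : b * star x = 0 := by
    simpa only [star_mul, hb.star_eq, star_zero] using congrArg star hxb
  have hxe : star x * x ∈ closedRightIdeal e := by
    rw [hxs]
    exact mul_mem_closedRightIdeal (sub_mem (sqrt_mem_closedRightIdeal he)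
      (mul_mem_closedRightIdeal hge r)) x
  have hx0 := star_mul_self_nonneg x
  refine ⟨star x * x, ⟨mem_perp_her (by rw [mul_assoc, hxb, mul_zero])
    (by rw [← mul_assoc, hbx, zero_mul]), ?_⟩, hx0, fun τ => ?_⟩
  · exact (mem_her_of_isSelfAdjoint he hx0.isSelfAdjoint).mpr hxe
  · have hrg : star (r * g) * (r * g) ∈ closedRightIdeal g := by
      rw [star_mul, hgs, mul_assoc]
      exact mul_mem_closedRightIdeal_self g _
    calc dTau τ e = dTau τ (star (x + r * g) * (x + r * g)) := by
          rw [sub_add_cancel, hr, CFC.sqrt_mul_sqrt_self e he]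
      _ ≤ dTau τ (star x * x) + dTau τ (star (r * g) * (r * g)) := dTau_star_add_mul_add_le τ x _
      _ ≤ dTau τ (star x * x) + dTau τ g :=
          add_le_add_right (dTau_mono τ hg (star_mul_self_nonneg _) hrg) _

lemma dTau_le_tauOpenProj (τ : QuasiTrace R) {C : Set R} {e c : R} (he : 0 ≤ e) (hc : 0 ≤ c)
    (hcC : c ∈ perp C ∩ her e) : dTau τ c ≤ tauOpenProj τ (perp C ∩ her e) :=
  (dTau_le_iff τ).mpr fun ε hε =>
    le_iSup (fun c : {c : R // c ∈ perp C ∩ her e ∧ 0 ≤ c ∧ ‖c‖ ≤ 1} => τ.toFun c)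
      ⟨fEps ε c, ⟨fEps_mem_perp hc.isSelfAdjoint hcC.1 hε,
        fEps_mem_her he hc.isSelfAdjoint hcC.2 hε⟩, fEps_nonneg ε c, norm_fEps_le ε c⟩

lemma tauOpenProj_perp_her_add_le (τ : QuasiTrace R) {e b : R} (he : 0 ≤ e) (hb : 0 ≤ b)
    (hb1 : ‖b‖ ≤ 1) (hbe : b ∈ her e) :
    tauOpenProj τ (perp (her b) ∩ her e) + τ.toFun b ≤ dTau τ e := by
  have hbb : b ∈ her b :=
    (mem_her_of_isSelfAdjoint hb hb.isSelfAdjoint).mpr (self_mem_closedRightIdeal b)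
  have : Nonempty {c : R // c ∈ perp (her b) ∩ her e ∧ 0 ≤ c ∧ ‖c‖ ≤ 1} :=
    ⟨0, ⟨fun _ _ => by simp, (mem_her_iff he).mpr (by simp)⟩, le_rfl, by simp⟩
  rw [tauOpenProj, ENNReal.iSup_add]
  refine iSup_le fun ⟨c, ⟨hcb, hce⟩, hc, hc1⟩ => ?_
  obtain ⟨hcb0, hbc0⟩ := hcb b hbb
  have hnorm : ‖c + b‖ ≤ 1 := by
    rw [hc.isSelfAdjoint.norm_add_eq_max hb.isSelfAdjoint hcb0]
    exact max_le hc1 hb1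
  rw [← τ.map_add_of_commute c b hc hb (hcb0.trans hbc0.symm)]
  exact τ.toFun_le_dTau he (add_nonneg hc hb) hnorm
    (add_mem ((mem_her_iff he).mp hce).1 ((mem_her_iff he).mp hbe).1)

/-! ### Tracially large subelements -/

lemma exists_mem_her_toFun_add_le {S : Set (QuasiTrace R)} {a e : R} (ha : 0 ≤ a) (he : 0 ≤ e)
    (h : CuntzLE a e) {K : ℝ≥0∞} (hω : omegaOn S a < K) :
    ∃ b g : R, 0 ≤ b ∧ ‖b‖ ≤ 1 ∧ b ∈ her e ∧ 0 ≤ g ∧ g ∈ closedRightIdeal e ∧ g * b = b ∧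
      omegaOn S b < K ∧ (∀ τ : QuasiTrace R, τ.toFun b ≤ dTau τ a ∧ dTau τ g ≤ dTau τ a) ∧
      ∃ L < K, ∀ τ ∈ S, dTau τ a ≤ τ.toFun b + L := by
  obtain ⟨δ, hδ, L, hL, hδL⟩ := exists_dTau_le_of_omegaOn_lt hω
  obtain ⟨d, hde, hd, hda⟩ := h.exists_mem_closedRightIdeal_toFun_le ha he hδ
  have hmem (ε : ℝ) (hε : 0 < ε) : fEps ε d ∈ closedRightIdeal d :=
    fEps_mem_closedRightIdeal hε hd.isSelfAdjoint (self_mem_closedRightIdeal d)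
  have hdim (τ : QuasiTrace R) (ε : ℝ) (hε : 0 < ε) : dTau τ (fEps ε d) ≤ dTau τ a :=
    (dTau_mono τ hd (fEps_nonneg ε d) (hmem ε hε)).trans (hda τ).1
  have hbe : fEps (1 / 2) d ∈ her e := (mem_her_of_isSelfAdjoint he (star_fEps _ d)).mpr <|
    closedRightIdeal_le hde (hmem _ one_half_pos)
  refine ⟨fEps (1 / 2) d, fEps (1 / 4) d, fEps_nonneg _ d, norm_fEps_le _ d, hbe, fEps_nonneg _ d,
    closedRightIdeal_le hde (hmem _ (by norm_num)), fEps_mul_fEps' (by norm_num) (by norm_num) d,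
    ?_, fun τ => ⟨?_, hdim τ _ (by norm_num)⟩, L, hL, fun τ hτ => ?_⟩
  · refine (omegaOn_le_of_dTau_le fun τ hτ => ?_).trans_lt hL
    calc dTau τ (fEps (1 / 2) d) ≤ dTau τ a := hdim τ _ one_half_pos
      _ ≤ τ.toFun (fEps δ a) + L := hδL τ hτ
      _ ≤ τ.toFun (fEps 1 (fEps (1 / 2) d)) + L := by
        gcongr
        exact ((hda τ).2 1 one_pos le_rfl).trans
          (toFun_fEps_le_toFun_fEps_fEps τ one_pos one_pos le_rfl hd.isSelfAdjoint)
  · exact (toFun_fEps_le_dTau τ one_half_pos d).trans (hda τ).1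
  · exact (hδL τ hτ).trans (by gcongr; exact (hda τ).2 _ one_half_pos (by norm_num))

theorem exists_tracially_large_subelement_general (S : Set (QuasiTrace R)) {e a : R} (he : 0 ≤ e)
    (ha : 0 ≤ a) (hfin : ∀ τ ∈ S, dTau τ e < ∞) (hae : CuntzLE a e) {ε : ℝ}
    (hω : omegaOn S a < ENNReal.ofReal (ε / 2)) :
    ∃ b : R, b ∈ her e ∧ 0 ≤ b ∧ ‖b‖ ≤ 1 ∧
      (∀ τ ∈ S, dTau τ a < τ.toFun b + ENNReal.ofReal ε ∧ τ.toFun b ≤ dTau τ a) ∧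
      omegaOn S b < ENNReal.ofReal (ε / 2) ∧
      ∃ eC : R, eC ∈ perp (her b) ∩ her e ∧ 0 ≤ eC ∧
        ∀ τ ∈ S,
          dTau τ e ≤ dTau τ eC + dTau τ a ∧
          dTau τ eC ≤ tauOpenProj τ (perp (her b) ∩ her e) ∧
          tauOpenProj τ (perp (her b) ∩ her e) + dTau τ a < dTau τ e + ENNReal.ofReal ε := by
  obtain ⟨b, g, hb, hb1, hbe, hg, hge, hgb, hωb, hτ, L, hL, hab⟩ :=
    exists_mem_her_toFun_add_le ha he hae hω
  obtain ⟨c, hcmem, hc, hec⟩ := exists_mem_perp_her_dTau_le_add he hb.isSelfAdjoint hg hge hgb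
  have hproj (τ : QuasiTrace R) := tauOpenProj_perp_her_add_le τ he hb hb1 hbe
  have hLε : L < ENNReal.ofReal ε := by
    have hε : 0 < ε / 2 := ENNReal.ofReal_pos.mp (hL.pos)
    exact hL.trans_le (ENNReal.ofReal_le_ofReal (by linarith))
  refine ⟨b, hbe, hb, hb1, fun τ hτS => ⟨?_, (hτ τ).1⟩, hωb, c, hcmem, hc, fun τ hτS =>
    ⟨(hec τ).trans (add_le_add_right (hτ τ).2 _), dTau_le_tauOpenProj τ he hc hcmem, ?_⟩⟩
  · have hbfin : τ.toFun b ≠ ∞ := ((le_add_self.trans (hproj τ)).trans_lt (hfin τ hτS)).ne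
    exact (hab τ hτS).trans_lt (ENNReal.add_lt_add_left hbfin hLε)
  · calc tauOpenProj τ (perp (her b) ∩ her e) + dTau τ a
        ≤ tauOpenProj τ (perp (her b) ∩ her e) + τ.toFun b + L := by
          rw [add_assoc]
          exact add_le_add_right (hab τ hτS) _
      _ ≤ dTau τ e + L := add_le_add_left (hproj τ) _
      _ < dTau τ e + ENNReal.ofReal ε := ENNReal.add_lt_add_left (hfin τ hτS).ne hLε

/-- **Lemma.** Let `A` be a σ-unital algebraically simple C*-algebra with strict comparison
which is not purely infinite, and let `e, a ∈ Ped(A ⊗ K)₊` be contractions with `ω(a) = 0` and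
`d_τ(a) < d_τ(e)` on `\overline{QT(A)}^w`.  Then for every `ε > 0` there is a positive
contraction `b ∈ Her(e)` with: (1) `d_τ(a) - ε < τ(b) ≤ d_τ(a)`; (2) `ω(b) < ε/2`; and
(3) there is a positive `e_C ∈ Her(b)^⊥ ∩ Her(e)` with
`d_τ(e) - d_τ(a) ≤ d_τ(e_C) ≤ τ(q) < d_τ(e) - d_τ(a) + ε` for all `τ ∈ \overline{QT(A)}^w`,
where `τ(q) = sup {τ(c) : c ∈ (Her(b)^⊥ ∩ Her(e))₊, ‖c‖ ≤ 1}` is the value at the open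
projection associated with `Her(b)^⊥ ∩ Her(e)`. -/
theorem exists_tracially_large_subelement
    (SB : Stabilization A W)
    (hσ : SigmaUnital A) (hsimple : IsSimpleCStar A) (halg : pedersen A = Set.univ)
    (hsc : StrictComparison W) (hnpi : ¬ PurelyInfinite A)
    (e a : W) (he : 0 ≤ e) (hea : e ∈ pedersen W) (hecontr : ‖e‖ ≤ 1)
    (ha : 0 ≤ a) (haPed : a ∈ pedersen W) (hacontr : ‖a‖ ≤ 1)
    (hω : omegaOn (closure (QTSet SB)) a = 0)
    (hlt : ∀ τ ∈ closure (QTSet SB), dTau τ a < dTau τ e)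
    (ε : ℝ) (hε : 0 < ε) :
    ∃ b : W, b ∈ her e ∧ 0 ≤ b ∧ ‖b‖ ≤ 1 ∧
      (∀ τ ∈ closure (QTSet SB),
        dTau τ a < τ.toFun b + ENNReal.ofReal ε ∧ τ.toFun b ≤ dTau τ a) ∧
      omegaOn (closure (QTSet SB)) b < ENNReal.ofReal (ε / 2) ∧
      ∃ eC : W, eC ∈ perp (her b) ∩ her e ∧ 0 ≤ eC ∧
        ∀ τ ∈ closure (QTSet SB),
          dTau τ e ≤ dTau τ eC + dTau τ a ∧
          dTau τ eC ≤ tauOpenProj τ (perp (her b) ∩ her e) ∧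
          tauOpenProj τ (perp (her b) ∩ her e) + dTau τ a < dTau τ e + ENNReal.ofReal ε := by
  exact exists_tracially_large_subelement_general (closure (QTSet SB)) he ha
    (fun τ _ => dTau_lt_top_of_mem_pedersen τ he hea)
    (cuntzLE_of_forall_dTau_lt SB halg hsc ha he fun τ hτ => hlt τ (subset_closure hτ))
    (by rw [hω]; exact ENNReal.ofReal_pos.mpr (half_pos hε))
end Paper
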